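/- Let ρ : (0,∞) → (0,∞) satisfy ρ(t)/t → ∞ as t → ∞, and assume the tail function F̄_R(y) := P(R ≥ y) is regularly varying of index −m with m > γ. Then P(Y_t ≥ ρ(t)) = Q·D·t^{−(γ−1)}·F̄_R(ρ(t)/t)·(1+o(1)) as t → ∞, where D := m(m−1)/(γ(γ−1)(m−γ+1)(m−γ)). -/

import Mathlib

open MeasureTheory Filter Set
open scoped ENNReal NNReal Topology

noncomputable section

/-- `ℓ_t(s,u)`: the length of the interval `[s,s+u] ∩ [0,t]`. -/
def ellK (t s u : ℝ) : ℝ := max 0 (min (s + u) t - max s 0)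

/-- The intensity measure `u^{-γ-1} du` on `(0,∞)`. -/
def muU (γ : ℝ) : Measure ℝ :=
  (volume.restrict (Set.Ioi 0)).withDensity fun u => ENNReal.ofReal (u ^ (-γ - 1))

/-- The measure `μ^ℓ_t` on `(0,∞)`:
`μ^ℓ_t(A) = ∫_ℝ ∫_0^∞ 1{ℓ_t(s,u) ∈ A} u^{-γ-1} du ds`. -/
def muEll (γ t : ℝ) : Measure ℝ :=
  (Measure.map (fun p : ℝ × ℝ => ellK t p.1 p.2)
    ((volume : Measure ℝ).prod (muU γ))).restrict (Set.Ioi 0)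

/-- The measure `μ^{ℓ,r}_t` on `(0,∞)`:
`μ^{ℓ,r}_t(A) = ∫_{(0,∞)} ∫_{(0,∞)} 1{rℓ ∈ A} μ^ℓ_t(dℓ) F_R(dr)`. -/
def muEllR (γ t : ℝ) (FR : Measure ℝ) : Measure ℝ :=
  (Measure.map (fun p : ℝ × ℝ => p.1 * p.2) (FR.prod (muEll γ t))).restrict (Set.Ioi 0)

/-- The measure `ν` on `[0,1]`: density `s^{-(γ+1)} + ((2-γ)/γ)·s^{-γ}` on `(0,1)` with
respect to Lebesgue measure, together with an atom of mass `1/(γ(γ-1))` at the point `1`. -/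
def nuM (γ : ℝ) : Measure ℝ :=
  (volume.restrict (Set.Ioo 0 1)).withDensity
      (fun s => ENNReal.ofReal (s ^ (-(γ + 1)) + (2 - γ) / γ * s ^ (-γ)))
    + (Real.toNNReal (1 / (γ * (γ - 1)))) • Measure.dirac 1

instance nuM.sigmaFinite (γ : ℝ) : SigmaFinite (nuM γ) := by
  unfold nuM; infer_instance

end

/-! Scaling time turns `muEllR γ t F` into `t ^ (1 - γ)` times the image of `ν = muEllR γ 1 F` under
multiplication by `t`, so `Y_t / t` is a centered Poisson integral with the fixed jump measure `ν`
and intensity `λ = Q t ^ (1 - γ)`, bounded as `t → ∞`. As `ν` is the multiplicative convolution of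
`F` with `muEll γ 1`, which lives on `(0, 1]`, Breiman's lemma shows that its tail is asymptotic to
`D` times that of `F`, with `D = ∫ w ^ m ∂(muEll γ 1)`; in particular it is regularly varying.

What remains is the principle of a single big jump: if `y → ∞` and `λ` stays bounded, then
`P(Y ≥ y) ~ λ ν[y, ∞)`. Split `Y` at level `ε y` into independent small and large jumps. The small
jumps and the compensators move `Y` by more than `η y` only with probability `o(λ ν[y, ∞))`, by a
Chernoff bound with exponent of order `log (y / λ) / (ε y)`; this needs only `∫ v ^ p ∂ν < ∞` for
some `p ∈ (1, 2]`. Among the large jumps, two or more have probability `O((λ ν[ε y, ∞)) ^ 2)`, and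
a single one exceeds `(1 ± η) y` with probability `~ λ ν[(1 ± η) y, ∞)`. -/

noncomputable section

section RegularVariation

/-- Regular variation at infinity with index `α`; the positivity usually required of `f` is left to
the lemmas. -/
def IsRegularlyVarying (f : ℝ → ℝ) (α : ℝ) : Prop :=
  ∀ c : ℝ, 0 < c → Tendsto (fun y => f (c * y) / f y) atTop (𝓝 (c ^ α))

lemma rpow_le_two_rpow_abs {u : ℝ} (hu : 1 / 2 ≤ u) (hu' : u ≤ 2) (β : ℝ) :
    u ^ β ≤ 2 ^ |β| := by
  have hu0 : 0 < u := by linarith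
  have hlog : |Real.log u| ≤ Real.log 2 := by
    refine abs_le.2 ⟨?_, Real.log_le_log hu0 hu'⟩
    rw [← Real.log_inv]
    exact Real.log_le_log (by norm_num) (by linarith)
  rw [Real.rpow_def_of_pos hu0, Real.rpow_def_of_pos two_pos, Real.exp_le_exp]
  calc Real.log u * β ≤ |Real.log u| * |β| := (le_abs_self _).trans (abs_mul _ _).le
    _ ≤ Real.log 2 * |β| := by gcongr

lemma two_rpow_neg_abs_le_rpow {u : ℝ} (hu : 1 / 2 ≤ u) (hu' : u ≤ 2) (β : ℝ) :
    2 ^ (-|β|) ≤ u ^ β := by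
  have hu0 : 0 < u := by linarith
  have h := rpow_le_two_rpow_abs hu hu' (-β)
  rw [abs_neg, Real.rpow_neg hu0.le] at h
  rw [Real.rpow_neg two_pos.le]
  exact inv_le_of_inv_le₀ (Real.rpow_pos_of_pos hu0 β) h

lemma le_pow_mul_of_doubling {g : ℝ → ℝ} {C y₀ : ℝ} (hC : 0 ≤ C) (hy₀ : 0 ≤ y₀)
    (hg : ∀ y ≥ y₀, g (2 * y) ≤ C * g y) (n : ℕ) : ∀ y ≥ y₀, g (2 ^ n * y) ≤ C ^ n * g y := by
  induction n with
  | zero => simp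
  | succ n ih =>
    intro y hy
    have hy' : y₀ ≤ 2 ^ n * y := by
      nlinarith [one_le_pow₀ (n := n) (one_le_two : (1 : ℝ) ≤ 2)]
    calc g (2 ^ (n + 1) * y) = g (2 * (2 ^ n * y)) := by ring_nf
      _ ≤ C * (C ^ n * g y) := (hg _ hy').trans (mul_le_mul_of_nonneg_left (ih y hy) hC)
      _ = C ^ (n + 1) * g y := by ring

namespace IsRegularlyVarying

variable {f g : ℝ → ℝ} {α β : ℝ}

lemma eventually_ne_zero (hf : IsRegularlyVarying f α) : ∀ᶠ y in atTop, f y ≠ 0 := by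
  have h := hf 1 one_pos
  rw [Real.one_rpow] at h
  filter_upwards [h.eventually_ne one_ne_zero] with y hy h0
  simp [h0] at hy

lemma pos_of_antitoneOn (hf : IsRegularlyVarying f α) (hanti : AntitoneOn f (Ioi 0))
    (hnonneg : ∀ y, 0 ≤ f y) {y : ℝ} (hy : 0 < y) : 0 < f y := by
  obtain ⟨z, hz, hyz⟩ := (hf.eventually_ne_zero.and (eventually_ge_atTop y)).exists
  exact ((hnonneg z).lt_of_ne' hz).trans_le (hanti hy (hy.trans_le hyz) hyz)

lemma of_tendsto_div {D : ℝ} (hg : IsRegularlyVarying g α) (hD : D ≠ 0)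
    (hfg : Tendsto (fun y => f y / g y) atTop (𝓝 D)) : IsRegularlyVarying f α := by
  intro c hc
  have hmul : Tendsto (fun y => c * y) atTop atTop := tendsto_id.const_mul_atTop hc
  have h := ((hfg.comp hmul).mul (hg c hc)).div hfg hD
  rw [mul_div_cancel_left₀ _ hD] at h
  refine h.congr' ?_
  filter_upwards [hg.eventually_ne_zero, hmul.eventually hg.eventually_ne_zero] with y hy hcy
  simp only [Function.comp_apply, Pi.div_apply]
  field_simp

/-- The upper Potter bound. -/
lemma eventually_mul_le (hf : IsRegularlyVarying f α) (hanti : AntitoneOn f (Ioi 0))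
    (hnonneg : ∀ y, 0 ≤ f y) (hαβ : α < β) :
    ∀ᶠ y in atTop, ∀ x : ℝ, 1 ≤ x → f (x * y) ≤ 2 ^ |β| * x ^ β * f y := by
  have hlt : (2 : ℝ) ^ α < 2 ^ β := Real.rpow_lt_rpow_of_exponent_lt one_lt_two hαβ
  obtain ⟨y₀, hy₀⟩ := eventually_atTop.1 ((hf 2 two_pos).eventually_lt_const hlt)
  filter_upwards [eventually_ge_atTop (max y₀ 1)] with y hy x hx
  have hz0 (z : ℝ) (hz : max y₀ 1 ≤ z) : 0 < z := one_pos.trans_le ((le_max_right _ _).trans hz)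
  have hy0 := hz0 y hy
  obtain ⟨n, hn, hn'⟩ := exists_nat_pow_near hx one_lt_two
  have hdouble : f (2 ^ n * y) ≤ ((2 : ℝ) ^ β) ^ n * f y :=
    le_pow_mul_of_doubling (by positivity) (by positivity) (fun z hz =>
      ((div_lt_iff₀ (hf.pos_of_antitoneOn hanti hnonneg (hz0 z hz))).1
        (hy₀ z ((le_max_left _ _).trans hz))).le) n y hy
  have hx0 : 0 < x := by linarith
  have hxy : x * y ∈ Ioi 0 := mul_pos hx0 hy0
  have hratio : ((2 : ℝ) ^ n / x) ^ β ≤ 2 ^ |β| := by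
    rw [pow_succ] at hn'
    refine rpow_le_two_rpow_abs ?_ ?_ β
    · rw [div_le_div_iff₀ two_pos hx0]; linarith
    · rw [div_le_iff₀ hx0]; linarith
  calc f (x * y) ≤ f (2 ^ n * y) :=
        hanti (mul_pos (by positivity) hy0) hxy (mul_le_mul_of_nonneg_right hn hy0.le)
    _ ≤ ((2 : ℝ) ^ β) ^ n * f y := hdouble
    _ = (2 ^ n / x) ^ β * x ^ β * f y := by
        rw [← Real.mul_rpow (by positivity) hx0.le, div_mul_cancel₀ _ hx0.ne',
          ← Real.rpow_natCast 2 n, ← Real.rpow_natCast, ← Real.rpow_mul two_pos.le,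
          ← Real.rpow_mul two_pos.le, mul_comm β]
    _ ≤ 2 ^ |β| * x ^ β * f y := by
        gcongr
        exact hnonneg y

/-- The lower Potter bound. -/
lemma eventually_le_mul (hf : IsRegularlyVarying f α) (hanti : AntitoneOn f (Ioi 0))
    (hnonneg : ∀ y, 0 ≤ f y) (hβα : β < α) :
    ∀ᶠ y in atTop, ∀ x : ℝ, 1 ≤ x → 2 ^ (-|β|) * x ^ β * f y ≤ f (x * y) := by
  have hlt : (2 : ℝ) ^ β < 2 ^ α := Real.rpow_lt_rpow_of_exponent_lt one_lt_two hβα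
  obtain ⟨y₀, hy₀⟩ := eventually_atTop.1 ((hf 2 two_pos).eventually_const_lt hlt)
  filter_upwards [eventually_ge_atTop (max y₀ 1)] with y hy x hx
  have hz0 (z : ℝ) (hz : max y₀ 1 ≤ z) : 0 < z := one_pos.trans_le ((le_max_right _ _).trans hz)
  have hy0 := hz0 y hy
  obtain ⟨n, hn, hn'⟩ := exists_nat_pow_near hx one_lt_two
  have hdouble : ((2 : ℝ) ^ β) ^ (n + 1) * f y ≤ f (2 ^ (n + 1) * y) := by
    have := le_pow_mul_of_doubling (g := fun z => -f z) (C := 2 ^ β) (by positivity)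
      (by positivity) (fun z hz => by
        have := (lt_div_iff₀ (hf.pos_of_antitoneOn hanti hnonneg (hz0 z hz))).1
          (hy₀ z ((le_max_left _ _).trans hz))
        linarith) (n + 1) y hy
    linarith
  have hx0 : 0 < x := by linarith
  have hxy : x * y ∈ Ioi 0 := mul_pos hx0 hy0
  have hratio : (2 : ℝ) ^ (-|β|) ≤ (2 ^ (n + 1) / x) ^ β := by
    rw [pow_succ] at hn' ⊢
    refine two_rpow_neg_abs_le_rpow ?_ ?_ β
    · rw [div_le_div_iff₀ two_pos hx0]; linarith
    · rw [div_le_iff₀ hx0]; linarith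
  calc 2 ^ (-|β|) * x ^ β * f y ≤ (2 ^ (n + 1) / x) ^ β * x ^ β * f y := by
        gcongr
        exact hnonneg y
    _ = ((2 : ℝ) ^ β) ^ (n + 1) * f y := by
        rw [← Real.mul_rpow (by positivity) hx0.le, div_mul_cancel₀ _ hx0.ne',
          ← Real.rpow_natCast 2, ← Real.rpow_natCast, ← Real.rpow_mul two_pos.le,
          ← Real.rpow_mul two_pos.le, mul_comm β]
    _ ≤ f (2 ^ (n + 1) * y) := hdouble
    _ ≤ f (x * y) :=
        hanti hxy (mul_pos (by positivity) hy0) (mul_le_mul_of_nonneg_right hn'.le hy0.le)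

lemma exists_eventually_mul_rpow_le (hf : IsRegularlyVarying f α) (hanti : AntitoneOn f (Ioi 0))
    (hnonneg : ∀ y, 0 ≤ f y) (hβα : β < α) : ∃ c > 0, ∀ᶠ y in atTop, c * y ^ β ≤ f y := by
  obtain ⟨z, hpotter, hz⟩ :=
    ((hf.eventually_le_mul hanti hnonneg hβα).and (eventually_gt_atTop 0)).exists
  refine ⟨2 ^ (-|β|) * f z / z ^ β, ?_, ?_⟩
  · have := hf.pos_of_antitoneOn hanti hnonneg hz
    positivity
  filter_upwards [eventually_ge_atTop z] with y hy
  have h := hpotter (y / z) ((one_le_div hz).2 hy)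
  rw [div_mul_cancel₀ _ hz.ne', Real.div_rpow (hz.le.trans hy) hz.le] at h
  calc 2 ^ (-|β|) * f z / z ^ β * y ^ β = 2 ^ (-|β|) * (y ^ β / z ^ β) * f z := by ring
    _ ≤ f y := h

end IsRegularlyVarying

lemma antitoneOn_measureReal_Ici {μ : Measure ℝ} (hμ : ∀ y, 0 < y → μ (Ici y) ≠ ∞) :
    AntitoneOn (fun y => μ.real (Ici y)) (Ioi 0) :=
  fun _ hy _ _ h => measureReal_mono (Ici_subset_Ici.2 h) (hμ _ hy)

end RegularVariation

section Breiman

variable {m : ℝ}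

lemma integrable_rpow_of_isRegularlyVarying {μ : Measure ℝ} [IsFiniteMeasure μ]
    (hμ : ∀ᵐ v ∂μ, 0 ≤ v) (hreg : IsRegularlyVarying (fun y => μ.real (Ici y)) (-m)) {p : ℝ}
    (hp : 0 < p) (hpm : p < m) : Integrable (fun v => v ^ p) μ := by
  obtain ⟨q, hpq, hqm⟩ := exists_between hpm
  obtain ⟨y₀, hpotter, hy₀⟩ := ((hreg.eventually_mul_le
    (antitoneOn_measureReal_Ici fun _ _ => measure_ne_top _ _) (fun _ => measureReal_nonneg)
    (neg_lt_neg hqm)).and (eventually_gt_atTop 0)).exists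
  have hsmall : IntegrableOn (fun u : ℝ => μ.real univ * u ^ (p - 1)) (Ioc 0 y₀) :=
    ((intervalIntegrable_iff_integrableOn_Ioc_of_le hy₀.le).1
      (intervalIntegral.intervalIntegrable_rpow' (by linarith))).const_mul _
  set K := 2 ^ |-q| * y₀ ^ q * μ.real (Ici y₀)
  have hlarge : IntegrableOn (fun u : ℝ => K * u ^ (p - 1 - q)) (Ioi y₀) :=
    (integrableOn_Ioi_rpow_of_lt (by linarith) hy₀).const_mul _
  have hnonneg : 0 ≤ᵐ[μ] fun v => v ^ p := hμ.mono fun v hv => Real.rpow_nonneg hv p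
  refine ⟨by fun_prop, (hasFiniteIntegral_iff_ofReal hnonneg).2 ?_⟩
  rw [lintegral_rpow_eq_lintegral_meas_le_mul μ hμ aemeasurable_id hp,
    ← Ioc_union_Ioi_eq_Ioi hy₀.le]
  refine ENNReal.mul_lt_top ENNReal.ofReal_lt_top ((lintegral_union_le _ _ _).trans_lt
    (ENNReal.add_lt_top.2 ⟨hsmall.lintegral_lt_top.trans_le' ?_,
      hlarge.lintegral_lt_top.trans_le' ?_⟩))
  · refine setLIntegral_mono' measurableSet_Ioc fun x _ => ?_
    rw [ENNReal.ofReal_mul measureReal_nonneg, ofReal_measureReal]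
    gcongr
    exact subset_univ _
  · refine setLIntegral_mono' measurableSet_Ioi fun x (hx : y₀ < x) => ?_
    have hx0 : 0 < x := hy₀.trans hx
    have htail : μ.real (Ici x) ≤ K * x ^ (-q) := by
      have h := hpotter (x / y₀) ((one_le_div hy₀).2 hx.le)
      rw [div_mul_cancel₀ _ hy₀.ne', Real.div_rpow hx0.le hy₀.le, Real.rpow_neg hy₀.le,
        div_inv_eq_mul] at h
      linarith
    rw [← ofReal_measureReal, ← ENNReal.ofReal_mul measureReal_nonneg, sub_eq_neg_add (p - 1) q,
      Real.rpow_add hx0, ← mul_assoc]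
    gcongr
    exact htail

lemma mconv_real_Ici (μ ν : Measure ℝ) [IsFiniteMeasure μ] [SFinite ν] (hν : ∀ᵐ w ∂ν, 0 < w)
    (y : ℝ) : (μ ∗ₘ ν).real (Ici y) = ∫ w, μ.real (Ici (y / w)) ∂ν := by
  have hmeas : Measurable fun p : ℝ × ℝ => p.1 * p.2 := by fun_prop
  have hfib : (fun w => μ ((fun r => (r, w)) ⁻¹' ((fun p : ℝ × ℝ => p.1 * p.2) ⁻¹' Ici y))) =ᵐ[ν]
      fun w => μ (Ici (y / w)) := by
    filter_upwards [hν] with w hw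
    congr 1 with r
    simp only [mem_preimage, mem_Ici, div_le_iff₀ hw]
  rw [measureReal_def, Measure.mconv, Measure.map_apply hmeas measurableSet_Ici,
    Measure.prod_apply_symm (hmeas measurableSet_Ici), lintegral_congr_ae hfib]
  refine (integral_toReal ?_ (ae_of_all _ fun w => measure_lt_top _ _)).symm
  exact (measurable_measure_prodMk_right (hmeas measurableSet_Ici)).aemeasurable.congr hfib

/-- Breiman's lemma. -/
theorem tendsto_mconv_real_Ici_div {μ ν : Measure ℝ} [IsFiniteMeasure μ] [SFinite ν]
    (hreg : IsRegularlyVarying (fun y => μ.real (Ici y)) (-m)) (hν : ∀ᵐ w ∂ν, w ∈ Ioc 0 1)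
    {q : ℝ} (hqm : q < m) (h_int : Integrable (fun w => w ^ q) ν) :
    Tendsto (fun y => (μ ∗ₘ ν).real (Ici y) / μ.real (Ici y)) atTop (𝓝 (∫ w, w ^ m ∂ν)) := by
  have hanti : AntitoneOn (fun y => μ.real (Ici y)) (Ioi 0) :=
    antitoneOn_measureReal_Ici fun _ _ => measure_ne_top _ _
  have hmeas : Measurable fun y => μ.real (Ici y) :=
    Antitone.measurable fun _ _ h => measureReal_mono (Ici_subset_Ici.2 h)
  simp_rw [mconv_real_Ici μ ν (hν.mono fun _ hw => hw.1), ← integral_div]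
  refine tendsto_integral_filter_of_dominated_convergence (fun w => 2 ^ |-q| * w ^ q)
    (Eventually.of_forall fun y =>
      ((hmeas.comp (measurable_const.div measurable_id)).div_const _).aestronglyMeasurable)
    ?_ (h_int.const_mul _) ?_
  · filter_upwards [eventually_gt_atTop 0, hreg.eventually_mul_le hanti
      (fun _ => measureReal_nonneg) (neg_lt_neg hqm)] with y hy hpotter
    filter_upwards [hν] with w hw
    have h := hpotter w⁻¹ (one_le_inv_iff₀.2 hw)
    rw [Real.inv_rpow hw.1.le, Real.rpow_neg hw.1.le, inv_inv, inv_mul_eq_div] at h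
    rw [Real.norm_of_nonneg (by positivity)]
    exact (div_le_iff₀ (hreg.pos_of_antitoneOn hanti (fun _ => measureReal_nonneg) hy)).2 h
  · filter_upwards [hν] with w hw
    have h := hreg w⁻¹ (inv_pos.2 hw.1)
    simpa only [Real.inv_rpow hw.1.le, Real.rpow_neg hw.1.le, inv_inv, inv_mul_eq_div] using h

end Breiman

section CompoundPoisson

section AddMonoid

variable {M : Type*} [AddMonoid M] [MeasurableSpace M] (ν : Measure M)

/-- The `n`-fold convolution power of `ν`. -/
def convPow : ℕ → Measure M
  | 0 => Measure.dirac 0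
  | n + 1 => convPow n ∗ ν

/-- The law of `X₁ + ⋯ + X_N`, where `N` is Poisson of parameter `λ = ν univ` and the jumps are
independent of law `ν / λ`, written without normalising `ν` so that `ν = 0` is allowed. -/
def compoundPoisson : Measure M :=
  ENNReal.ofReal (Real.exp (-ν.real univ)) •
    Measure.sum fun n : ℕ => ENNReal.ofReal (n.factorial : ℝ)⁻¹ • convPow ν n

variable [MeasurableAdd₂ M]

variable {𝕜 : Type*} [RCLike 𝕜] {χ : AddChar M 𝕜}

lemma integrable_addChar_convPow {ν : Measure M} (hmeas : Measurable χ) (h_int : Integrable χ ν)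
    (n : ℕ) : Integrable χ (convPow ν n) := by
  induction n with
  | zero => exact integrable_dirac' (f := χ) hmeas.stronglyMeasurable (by simp)
  | succ n ih =>
    rw [convPow, Measure.conv, integrable_map_measure (by fun_prop) (by fun_prop)]
    exact (ih.mul_prod h_int).congr (ae_of_all _ fun z => (χ.map_add_eq_mul z.1 z.2).symm)

variable [IsFiniteMeasure ν]

lemma convPow_one : convPow ν 1 = ν := Measure.dirac_zero_conv ν

instance isFiniteMeasure_convPow (n : ℕ) : IsFiniteMeasure (convPow ν n) := by
  induction n with
  | zero => exact inferInstanceAs (IsFiniteMeasure (Measure.dirac 0))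
  | succ n ih => exact inferInstanceAs (IsFiniteMeasure (convPow ν n ∗ ν))

variable {ν}

lemma integral_addChar_convPow (hmeas : Measurable χ) (n : ℕ) :
    ∫ x, χ x ∂(convPow ν n) = (∫ x, χ x ∂ν) ^ n := by
  induction n with
  | zero => simp [convPow, integral_dirac' _ _ hmeas.stronglyMeasurable]
  | succ n ih =>
    rw [convPow, Measure.conv, integral_map (by fun_prop) (by fun_prop)]
    simp_rw [χ.map_add_eq_mul]
    rw [integral_prod_mul, ih, pow_succ]

lemma integrable_addChar_compoundPoisson (hmeas : Measurable χ) (h_int : Integrable χ ν) :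
    Integrable χ (compoundPoisson ν) := by
  refine (integrable_sum_measure (fun n => ?_) ?_).smul_measure ENNReal.ofReal_ne_top
  · exact (integrable_addChar_convPow hmeas h_int n).smul_measure ENNReal.ofReal_ne_top
  · let χnorm : AddChar M ℝ := ⟨fun x => ‖χ x‖, by simp, fun x y => by simp [χ.map_add_eq_mul]⟩
    refine (Real.summable_pow_div_factorial (∫ x, ‖χ x‖ ∂ν)).congr fun n => ?_
    rw [integral_smul_measure, ENNReal.toReal_ofReal (by positivity), smul_eq_mul, div_eq_inv_mul]
    congr 1
    exact (integral_addChar_convPow (χ := χnorm) hmeas.norm n).symm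

lemma integral_addChar_compoundPoisson (hmeas : Measurable χ) (h_int : Integrable χ ν) :
    ∫ x, χ x ∂(compoundPoisson ν) = NormedSpace.exp (∫ x, χ x ∂ν - (ν.real univ : 𝕜)) := by
  have hsum := integrable_addChar_compoundPoisson hmeas h_int
  rw [compoundPoisson, integrable_smul_measure (by simp [Real.exp_pos]) ENNReal.ofReal_ne_top]
    at hsum
  have hterm (n : ℕ) : ∫ x, χ x ∂(ENNReal.ofReal (n.factorial : ℝ)⁻¹ • convPow ν n) =
      (∫ x, χ x ∂ν) ^ n / n.factorial := by
    rw [integral_smul_measure, integral_addChar_convPow hmeas,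
      ENNReal.toReal_ofReal (by positivity), RCLike.real_smul_eq_coe_mul, div_eq_inv_mul]
    push_cast
    rfl
  rw [compoundPoisson, integral_smul_measure, integral_sum_measure hsum, tsum_congr hterm,
    ← congrFun NormedSpace.exp_eq_tsum_div, ENNReal.toReal_ofReal (Real.exp_pos _).le,
    RCLike.real_smul_eq_coe_mul, sub_eq_neg_add, NormedSpace.exp_add]
  congr 1
  rw [Real.exp_eq_exp_ℝ, ← RCLike.ofReal_neg]
  exact NormedSpace.algebraMap_exp_comm (𝔸 := 𝕜) (-ν.real univ)

instance isProbabilityMeasure_compoundPoisson : IsProbabilityMeasure (compoundPoisson ν) := by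
  have h := integral_addChar_compoundPoisson (ν := ν) (χ := (1 : AddChar M ℝ)) measurable_const
    (integrable_const (1 : ℝ))
  simp only [AddChar.one_apply, integral_const, smul_eq_mul, mul_one, RCLike.ofReal_real_eq_id,
    id_eq, sub_self, NormedSpace.exp_zero] at h
  exact ⟨(ENNReal.toReal_eq_one_iff _).1 h⟩

lemma exp_neg_mul_le_compoundPoisson_real {A : Set M} (hA : MeasurableSet A) :
    Real.exp (-ν.real univ) * ((Measure.dirac 0).real A + ν.real A) ≤
      (compoundPoisson ν).real A := by
  have h : ENNReal.ofReal (Real.exp (-ν.real univ)) * (Measure.dirac 0 A + ν A) ≤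
      compoundPoisson ν A := by
    rw [compoundPoisson, Measure.smul_apply, Measure.sum_apply _ hA, smul_eq_mul]
    gcongr
    refine (le_of_eq ?_).trans (ENNReal.sum_le_tsum (Finset.range 2))
    rw [Finset.sum_range_succ, Finset.sum_range_one]
    simp [convPow_one, convPow.eq_1]
  have h' := ENNReal.toReal_mono (measure_ne_top _ _) h
  rwa [ENNReal.toReal_mul, ENNReal.toReal_ofReal (Real.exp_pos _).le,
    ENNReal.toReal_add (measure_ne_top _ _) (measure_ne_top _ _)] at h'

end AddMonoid

section Real

variable {ν : Measure ℝ} [IsFiniteMeasure ν]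

lemma compoundPoisson_real_Ici_le {x : ℝ} (hx : 0 < x) :
    (compoundPoisson ν).real (Ici x) ≤ ν.real (Ici x) + ν.real univ ^ 2 := by
  have hIio : Real.exp (-ν.real univ) * (1 + (ν.real univ - ν.real (Ici x))) ≤
      (compoundPoisson ν).real (Iio x) := by
    have hdirac : (Measure.dirac (0 : ℝ)).real (Iio x) = 1 := by simp [Measure.real, hx]
    rw [← measureReal_compl measurableSet_Ici, compl_Ici, ← hdirac]
    exact exp_neg_mul_le_compoundPoisson_real measurableSet_Iio
  have hcompl : (compoundPoisson ν).real (Ici x) = 1 - (compoundPoisson ν).real (Iio x) := by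
    rw [← compl_Iio, probReal_compl_eq_one_sub measurableSet_Iio]
  have hIci : ν.real (Ici x) ≤ ν.real univ := measureReal_mono (subset_univ _)
  have hexp := Real.add_one_le_exp (-ν.real univ)
  have hnonneg : 0 ≤ ν.real (Ici x) := measureReal_nonneg
  nlinarith [mul_le_mul_of_nonneg_right hexp
    (by linarith : 0 ≤ 1 + (ν.real univ - ν.real (Ici x))), mul_nonneg hnonneg (hnonneg.trans hIci)]

lemma integrable_exp_ofReal_mul_I (ν : Measure ℝ) [IsFiniteMeasure ν] (θ : ℝ) :
    Integrable (fun x : ℝ => Complex.exp (θ * x * Complex.I)) ν := by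
  refine Integrable.of_bound (C := 1) (by fun_prop) (ae_of_all _ fun x => ?_)
  rw [← Complex.ofReal_mul, Complex.norm_exp_ofReal_mul_I]

lemma charFun_compoundPoisson (θ : ℝ) :
    charFun (compoundPoisson ν) θ = Complex.exp (charFun ν θ - ν.real univ) := by
  let χ : AddChar ℝ ℂ := ⟨fun x => Complex.exp (θ * x * Complex.I), by simp, fun x y => by
    rw [← Complex.exp_add]; push_cast; ring_nf⟩
  have h := integral_addChar_compoundPoisson (ν := ν) (χ := χ)
    (show Measurable fun x : ℝ => Complex.exp (θ * x * Complex.I) by fun_prop)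
    (integrable_exp_ofReal_mul_I ν θ)
  rw [← Complex.exp_eq_exp_ℂ] at h
  simp only [charFun_apply_real]
  exact h

/-- The exponential character `x ↦ exp (s * x)` of the additive group of the reals, so that the
moment generating function of a law is its integral. -/
def expAddChar (s : ℝ) : AddChar ℝ ℝ :=
  ⟨fun x => Real.exp (s * x), by simp, fun x y => by rw [mul_add, Real.exp_add]⟩

lemma expAddChar_apply (s x : ℝ) : expAddChar s x = Real.exp (s * x) := rfl

lemma measurable_expAddChar (s : ℝ) : Measurable (expAddChar s) := by
  simp only [funext (expAddChar_apply s)]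
  fun_prop

lemma integrable_exp_mul_compoundPoisson {s : ℝ} (hs : Integrable (fun x => Real.exp (s * x)) ν) :
    Integrable (fun x => Real.exp (s * x)) (compoundPoisson ν) := by
  simp only [← expAddChar_apply] at hs ⊢
  exact integrable_addChar_compoundPoisson (measurable_expAddChar s) hs

lemma integral_exp_mul_compoundPoisson {s : ℝ} (hs : Integrable (fun x => Real.exp (s * x)) ν) :
    ∫ x, Real.exp (s * x) ∂(compoundPoisson ν) =
      Real.exp (∫ x, Real.exp (s * x) ∂ν - ν.real univ) := by
  simp only [← expAddChar_apply] at hs ⊢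
  have h := integral_addChar_compoundPoisson (measurable_expAddChar s) hs
  rwa [← Real.exp_eq_exp_ℝ] at h

end Real

end CompoundPoisson

section CenteredPoisson

/-- The law of a compound Poisson variable of jump measure `ν` minus its mean `∫ v, v ∂ν`. -/
def compensatedPoisson (ν : Measure ℝ) : Measure ℝ :=
  (compoundPoisson ν).map (· + -∫ v, v ∂ν)

/-- The integrand `e^{iθv} - 1 - iθv` of the Lévy–Khintchine exponent of a centered law without
Gaussian part. -/
def levyKernel (θ v : ℝ) : ℂ :=
  Complex.exp (θ * v * Complex.I) - 1 - θ * v * Complex.I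

/-- `π` is the law of the compensated Poisson integral `∫ v (N(dv) - μ(dv))`, where `N` is a
Poisson random measure of intensity `μ`. The intensity may be infinite near `0`, and the law is
pinned down by its characteristic function. -/
def IsCenteredPoissonLaw (μ π : Measure ℝ) : Prop :=
  ∀ θ : ℝ, charFun π θ = Complex.exp (∫ v, levyKernel θ v ∂μ)

lemma compensatedPoisson_real_Ici (ν : Measure ℝ) (x : ℝ) :
    (compensatedPoisson ν).real (Ici x) = (compoundPoisson ν).real (Ici (x + ∫ v, v ∂ν)) := by
  rw [compensatedPoisson, map_measureReal_apply (by fun_prop) measurableSet_Ici]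
  congr 1
  ext y
  simp only [mem_preimage, mem_Ici, ← sub_eq_add_neg, le_sub_iff_add_le]

@[fun_prop]
lemma measurable_levyKernel (θ : ℝ) : Measurable (levyKernel θ) := by
  unfold levyKernel
  fun_prop

section Finite

variable {ν : Measure ℝ} [IsFiniteMeasure ν]

instance isProbabilityMeasure_compensatedPoisson : IsProbabilityMeasure (compensatedPoisson ν) :=
  Measure.isProbabilityMeasure_map (by fun_prop)

lemma isCenteredPoissonLaw_compensatedPoisson (hid : Integrable (fun v : ℝ => v) ν) :
    IsCenteredPoissonLaw ν (compensatedPoisson ν) := by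
  intro θ
  have hexp := integrable_exp_ofReal_mul_I ν θ
  have hlin : Integrable (fun v : ℝ => θ * (v : ℂ) * Complex.I) ν :=
    (hid.ofReal.const_mul _).mul_const _
  have hexp_sub : Integrable (fun v : ℝ => Complex.exp (θ * v * Complex.I) - 1) ν :=
    hexp.sub (integrable_const _)
  simp only [levyKernel]
  rw [compensatedPoisson, charFun_map_add_const, charFun_compoundPoisson, ← Complex.exp_add,
    integral_sub hexp_sub hlin, integral_sub hexp (integrable_const _),
    charFun_apply_real, integral_mul_const, integral_const_mul, integral_complex_ofReal]
  congr 1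
  simp only [integral_const, Complex.real_smul, mul_one, Complex.ofReal_neg, RCLike.inner_apply,
    conj_trivial, Complex.ofReal_mul]
  ring

lemma integrable_levyKernel_of_isFiniteMeasure (hid : Integrable (fun v : ℝ => v) ν) (θ : ℝ) :
    Integrable (levyKernel θ) ν :=
  ((integrable_exp_ofReal_mul_I ν θ).sub (integrable_const _)).sub
    ((hid.ofReal.const_mul _).mul_const _)

lemma compensatedPoisson_add {ν' : Measure ℝ} [IsFiniteMeasure ν']
    (hid : Integrable (fun v : ℝ => v) ν) (hid' : Integrable (fun v : ℝ => v) ν') :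
    compensatedPoisson (ν + ν') = compensatedPoisson ν ∗ compensatedPoisson ν' := by
  refine Measure.ext_of_charFun (funext fun θ => ?_)
  rw [charFun_conv, isCenteredPoissonLaw_compensatedPoisson (hid.add_measure hid') θ,
    isCenteredPoissonLaw_compensatedPoisson hid θ, isCenteredPoissonLaw_compensatedPoisson hid' θ,
    integral_add_measure (integrable_levyKernel_of_isFiniteMeasure hid θ)
      (integrable_levyKernel_of_isFiniteMeasure hid' θ), Complex.exp_add]

lemma compensatedPoisson_real_le_exp_integral {s : ℝ} (hid : Integrable (fun v : ℝ => v) ν)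
    (hexp : Integrable (fun v : ℝ => Real.exp (s * v)) ν) (b : ℝ) :
    (compensatedPoisson ν).real {x | b ≤ s * x} ≤
      Real.exp (∫ v, (Real.exp (s * v) - 1 - s * v) ∂ν - b) := by
  set c := ∫ v, v ∂ν with hc
  have hshift : (fun x => Real.exp (1 * (s * (x + -c)))) =
      fun x => Real.exp (-(s * c)) * Real.exp (s * x) := by
    ext x
    rw [← Real.exp_add]
    ring_nf
  have hmarkov := ProbabilityTheory.measure_ge_le_exp_mul_mgf (μ := compoundPoisson ν)
    (X := fun x => s * (x + -c)) (t := 1) b zero_le_one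
    (hshift ▸ (integrable_exp_mul_compoundPoisson hexp).const_mul _)
  have hcumulant : ∫ v, (Real.exp (s * v) - 1 - s * v) ∂ν =
      ∫ v, Real.exp (s * v) ∂ν - ν.real univ - s * c := by
    have hexp_sub : Integrable (fun v : ℝ => Real.exp (s * v) - 1) ν :=
      hexp.sub (integrable_const _)
    rw [integral_sub hexp_sub (hid.const_mul s),
      integral_sub hexp (integrable_const _), integral_const_mul, hc]
    simp
  rw [compensatedPoisson,
    map_measureReal_apply (by fun_prop) (measurableSet_le measurable_const (by fun_prop))]
  refine hmarkov.trans_eq ?_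
  rw [ProbabilityTheory.mgf, hshift, integral_const_mul, integral_exp_mul_compoundPoisson hexp,
    hcumulant, ← Real.exp_add, ← Real.exp_add]
  ring_nf

end Finite

lemma exp_sub_one_sub_id_le (x : ℝ) : Real.exp x - 1 - x ≤ x ^ 2 * Real.exp |x| := by
  have h := Complex.norm_exp_sub_sum_le_norm_mul_exp (x : ℂ) 2
  simp only [Finset.sum_range_succ, Finset.sum_range_zero, zero_add, pow_zero, pow_one,
    Nat.factorial, Nat.cast_one, div_one, mul_one, Complex.norm_real, Real.norm_eq_abs, sq_abs] at h
  norm_cast at h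
  rw [Real.norm_eq_abs] at h
  linarith [le_abs_self (Real.exp x - (1 + x))]

end CenteredPoisson

section TruncatedMoments

variable {μ : Measure ℝ} {p q a v : ℝ}

lemma rpow_le_rpow_sub_mul_rpow_of_le_of_ge (ha : 0 < a) (hav : a ≤ v) (hqp : q ≤ p) :
    v ^ q ≤ a ^ (q - p) * v ^ p := by
  have hv := ha.trans_le hav
  calc v ^ q = v ^ (q - p) * v ^ p := by rw [← Real.rpow_add hv, sub_add_cancel]
    _ ≤ a ^ (q - p) * v ^ p := by
      gcongr ?_ * _
      exact Real.rpow_le_rpow_of_nonpos ha hav (by linarith)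

lemma rpow_le_rpow_sub_mul_rpow_of_ge_of_le (hv : 0 < v) (hva : v ≤ a) (hpq : p ≤ q) :
    v ^ q ≤ a ^ (q - p) * v ^ p := by
  calc v ^ q = v ^ (q - p) * v ^ p := by rw [← Real.rpow_add hv, sub_add_cancel]
    _ ≤ a ^ (q - p) * v ^ p := by
      gcongr ?_ * _
      exact Real.rpow_le_rpow hv.le hva (by linarith)

lemma integrableOn_rpow_of_le {s : Set ℝ} {c : ℝ} (hpos : ∀ᵐ v ∂μ, 0 < v) (hs : MeasurableSet s)
    (h_int : Integrable (fun v : ℝ => v ^ p) μ) (hle : ∀ v ∈ s, 0 < v → v ^ q ≤ c * v ^ p) :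
    IntegrableOn (fun v : ℝ => v ^ q) s μ := by
  refine Integrable.mono' (h_int.integrableOn.const_mul c)
    (measurable_id.pow_const q).aestronglyMeasurable ?_
  filter_upwards [ae_restrict_mem hs, ae_restrict_of_ae hpos] with v hvs hv
  rw [Real.norm_eq_abs, abs_of_nonneg (Real.rpow_nonneg hv.le q)]
  exact hle v hvs hv

lemma setIntegral_rpow_le_of_le {s : Set ℝ} {c : ℝ} (hpos : ∀ᵐ v ∂μ, 0 < v)
    (hs : MeasurableSet s) (h_int : Integrable (fun v : ℝ => v ^ p) μ) (hc : 0 ≤ c)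
    (hle : ∀ v ∈ s, 0 < v → v ^ q ≤ c * v ^ p) :
    ∫ v in s, v ^ q ∂μ ≤ c * ∫ v, v ^ p ∂μ := by
  rw [← integral_const_mul]
  calc ∫ v in s, v ^ q ∂μ ≤ ∫ v in s, c * v ^ p ∂μ := by
        refine integral_mono_ae (integrableOn_rpow_of_le hpos hs h_int hle)
          (h_int.integrableOn.const_mul c) ?_
        filter_upwards [ae_restrict_mem hs, ae_restrict_of_ae hpos] with v hvs hv
        exact hle v hvs hv
    _ ≤ ∫ v, c * v ^ p ∂μ := by
        refine setIntegral_le_integral (h_int.const_mul c) ?_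
        filter_upwards [hpos] with v hv
        exact mul_nonneg hc (Real.rpow_nonneg hv.le p)

lemma setIntegral_Ici_id_le (hpos : ∀ᵐ v ∂μ, 0 < v) (h_int : Integrable (fun v : ℝ => v ^ p) μ)
    (hp : 1 ≤ p) (ha : 0 < a) : ∫ v in Ici a, v ∂μ ≤ a ^ (1 - p) * ∫ v, v ^ p ∂μ := by
  have h := setIntegral_rpow_le_of_le (q := 1) hpos measurableSet_Ici h_int (by positivity)
    fun v hv _ => rpow_le_rpow_sub_mul_rpow_of_le_of_ge ha hv hp
  simpa only [Real.rpow_one] using h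

lemma setIntegral_Iio_sq_le (hpos : ∀ᵐ v ∂μ, 0 < v) (h_int : Integrable (fun v : ℝ => v ^ p) μ)
    (hp : p ≤ 2) (ha : 0 < a) : ∫ v in Iio a, v ^ 2 ∂μ ≤ a ^ (2 - p) * ∫ v, v ^ p ∂μ := by
  have h := setIntegral_rpow_le_of_le (q := 2) hpos measurableSet_Iio h_int (by positivity)
    fun v (hv : v < a) hv0 => rpow_le_rpow_sub_mul_rpow_of_ge_of_le hv0 hv.le hp
  simpa only [Real.rpow_two] using h

lemma measure_Ici_lt_top_of_integrable_rpow (hpos : ∀ᵐ v ∂μ, 0 < v)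
    (h_int : Integrable (fun v : ℝ => v ^ p) μ) (hp : 0 ≤ p) (ha : 0 < a) : μ (Ici a) < ∞ := by
  have h := integrableOn_rpow_of_le (q := 0) hpos measurableSet_Ici h_int
    fun v hv _ => rpow_le_rpow_sub_mul_rpow_of_le_of_ge ha hv hp
  simpa [integrableOn_const_iff] using h

lemma integrable_id_of_integrable_rpow [IsFiniteMeasure μ] (hpos : ∀ᵐ v ∂μ, 0 < v)
    (h_int : Integrable (fun v : ℝ => v ^ p) μ) (hp : 1 ≤ p) :
    Integrable (fun v : ℝ => v) μ := by
  refine ((integrable_const 1).add h_int).mono' (by fun_prop) ?_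
  filter_upwards [hpos] with v hv
  rw [Real.norm_eq_abs, abs_of_pos hv, Pi.add_apply]
  rcases le_total v 1 with h | h
  · linarith [Real.rpow_nonneg hv.le p]
  · linarith [Real.self_le_rpow_of_one_le h hp]

end TruncatedMoments

section SmallAndBigJumps

lemma conv_real_Ici_add_le (μ ν : Measure ℝ) [IsProbabilityMeasure μ] [IsProbabilityMeasure ν]
    (x y : ℝ) : (μ ∗ ν).real (Ici (x + y)) ≤ μ.real (Ici x) + ν.real (Ici y) := by
  have hsub : (fun z : ℝ × ℝ => z.1 + z.2) ⁻¹' Ici (x + y) ⊆ Ici x ×ˢ univ ∪ univ ×ˢ Ici y := by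
    rintro ⟨u, v⟩ huv
    simp only [mem_preimage, mem_Ici, mem_union, mem_prod, mem_univ, and_true, true_and] at huv ⊢
    by_contra! h
    linarith [h.1, h.2]
  rw [Measure.conv, map_measureReal_apply (by fun_prop) measurableSet_Ici]
  calc _ ≤ _ := measureReal_mono hsub
    _ ≤ _ := measureReal_union_le _ _
    _ = _ := by simp [measureReal_prod_prod]

lemma mul_le_conv_real_Ici_add (μ ν : Measure ℝ) [IsProbabilityMeasure μ] [IsProbabilityMeasure ν]
    (x y : ℝ) : μ.real (Ici x) * ν.real (Ici y) ≤ (μ ∗ ν).real (Ici (x + y)) := by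
  rw [Measure.conv, map_measureReal_apply (by fun_prop) measurableSet_Ici, ← measureReal_prod_prod]
  exact measureReal_mono fun z hz => show x + y ≤ z.1 + z.2 from add_le_add hz.1 hz.2

/-- The Chernoff bound, with exponential parameter `s`, for a deviation `h` of the compensated sum
of the jumps smaller than `a`, when the jump measure has `p`-th moment at most `M`. -/
def smallJumpBound (p M a h s : ℝ) : ℝ :=
  Real.exp (s ^ 2 * Real.exp (s * a) * (a ^ (2 - p) * M) - s * h)

variable {ν : Measure ℝ} [IsFiniteMeasure ν] {p M a h s x y : ℝ}

lemma compensatedPoisson_restrict_Iio_real_le (hpos : ∀ᵐ v ∂ν, 0 < v)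
    (h_int : Integrable (fun v : ℝ => v ^ p) ν) (hM : ∫ v, v ^ p ∂ν ≤ M) (hp : p ≤ 2) (ha : 0 < a)
    (s b : ℝ) : (compensatedPoisson (ν.restrict (Iio a))).real {x | b ≤ s * x} ≤
      Real.exp (s ^ 2 * Real.exp (|s| * a) * (a ^ (2 - p) * M) - b) := by
  set ν' := ν.restrict (Iio a)
  have hmem : ∀ᵐ v ∂ν', |v| ≤ a := by
    filter_upwards [ae_restrict_of_ae hpos, ae_restrict_mem measurableSet_Iio] with v hv hva
    rw [abs_of_pos hv]
    exact hva.le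
  have hmul : ∀ᵐ v ∂ν', |s * v| ≤ |s| * a := by
    filter_upwards [hmem] with v hv
    rw [abs_mul]
    gcongr
  have hid : Integrable (fun v : ℝ => v) ν' := .of_bound (C := a) (by fun_prop) hmem
  have hexp : Integrable (fun v : ℝ => Real.exp (s * v)) ν' := by
    refine .of_bound (C := Real.exp (|s| * a)) (by fun_prop) ?_
    filter_upwards [hmul] with v hv
    rw [Real.norm_eq_abs, Real.abs_exp]
    exact Real.exp_le_exp.2 ((le_abs_self _).trans hv)
  have hsq : Integrable (fun v : ℝ => v ^ 2) ν' := by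
    refine .of_bound (C := a ^ 2) (by fun_prop) ?_
    filter_upwards [hmem] with v hv
    rw [norm_pow, Real.norm_eq_abs]
    gcongr
  refine (compensatedPoisson_real_le_exp_integral hid hexp b).trans ?_
  gcongr
  calc ∫ v, (Real.exp (s * v) - 1 - s * v) ∂ν'
      ≤ ∫ v, s ^ 2 * Real.exp (|s| * a) * v ^ 2 ∂ν' := by
        refine integral_mono_ae ((hexp.sub (integrable_const _)).sub (hid.const_mul s))
          (hsq.const_mul _) ?_
        filter_upwards [hmul] with v hv
        calc Real.exp (s * v) - 1 - s * v ≤ (s * v) ^ 2 * Real.exp |s * v| :=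
              exp_sub_one_sub_id_le _
          _ ≤ (s * v) ^ 2 * Real.exp (|s| * a) := by gcongr
          _ = s ^ 2 * Real.exp (|s| * a) * v ^ 2 := by ring
    _ ≤ s ^ 2 * Real.exp (|s| * a) * (a ^ (2 - p) * M) := by
        rw [integral_const_mul]
        gcongr
        exact (setIntegral_Iio_sq_le hpos h_int hp ha).trans (by gcongr)

lemma compensatedPoisson_restrict_Iio_real_Ici_le (hpos : ∀ᵐ v ∂ν, 0 < v)
    (h_int : Integrable (fun v : ℝ => v ^ p) ν) (hM : ∫ v, v ^ p ∂ν ≤ M) (hp : p ≤ 2) (ha : 0 < a)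
    (hs : 0 < s) : (compensatedPoisson (ν.restrict (Iio a))).real (Ici h) ≤
      smallJumpBound p M a h s := by
  have hchernoff := compensatedPoisson_restrict_Iio_real_le hpos h_int hM hp ha s (s * h)
  simp only [mul_le_mul_iff_right₀ hs, abs_of_pos hs] at hchernoff
  exact hchernoff

lemma one_sub_le_compensatedPoisson_restrict_Iio_real_Ici_neg (hpos : ∀ᵐ v ∂ν, 0 < v)
    (h_int : Integrable (fun v : ℝ => v ^ p) ν) (hM : ∫ v, v ^ p ∂ν ≤ M) (hp : p ≤ 2) (ha : 0 < a)
    (hs : 0 < s) : 1 - smallJumpBound p M a h s ≤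
      (compensatedPoisson (ν.restrict (Iio a))).real (Ici (-h)) := by
  have hchernoff := compensatedPoisson_restrict_Iio_real_le hpos h_int hM hp ha (-s) (s * h)
  rw [abs_neg, abs_of_pos hs, neg_sq] at hchernoff
  rw [← compl_Iio, probReal_compl_eq_one_sub measurableSet_Iio]
  gcongr
  refine (measureReal_mono fun x (hx : x < -h) => ?_).trans hchernoff
  change s * h ≤ -s * x
  nlinarith

lemma compensatedPoisson_eq_conv (hpos : ∀ᵐ v ∂ν, 0 < v)
    (h_int : Integrable (fun v : ℝ => v ^ p) ν) (hp : 1 ≤ p) (a : ℝ) :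
    compensatedPoisson ν =
      compensatedPoisson (ν.restrict (Iio a)) ∗ compensatedPoisson (ν.restrict (Ici a)) := by
  have hid := integrable_id_of_integrable_rpow hpos h_int hp
  rw [← compensatedPoisson_add hid.integrableOn hid.integrableOn, ← compl_Iio,
    Measure.restrict_add_restrict_compl measurableSet_Iio]

lemma compensatedPoisson_real_Ici_le (hpos : ∀ᵐ v ∂ν, 0 < v)
    (h_int : Integrable (fun v : ℝ => v ^ p) ν) (hM : ∫ v, v ^ p ∂ν ≤ M) (hp1 : 1 ≤ p) (hp2 : p ≤ 2)
    (ha : 0 < a) (hs : 0 < s) (hx : 0 < x) :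
    (compensatedPoisson ν).real (Ici (h + x)) ≤
      smallJumpBound p M a h s + (ν.real (Ici x) + ν.real (Ici a) ^ 2) := by
  have hbig : (compensatedPoisson (ν.restrict (Ici a))).real (Ici x) ≤
      ν.real (Ici x) + ν.real (Ici a) ^ 2 := by
    have hmean : 0 ≤ ∫ v in Ici a, v ∂ν :=
      setIntegral_nonneg measurableSet_Ici fun v hv => ha.le.trans hv
    rw [compensatedPoisson_real_Ici]
    calc (compoundPoisson (ν.restrict (Ici a))).real (Ici (x + ∫ v in Ici a, v ∂ν))
        ≤ (compoundPoisson (ν.restrict (Ici a))).real (Ici x) :=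
          measureReal_mono (Ici_subset_Ici.2 (by linarith))
      _ ≤ (ν.restrict (Ici a)).real (Ici x) + (ν.restrict (Ici a)).real univ ^ 2 :=
          compoundPoisson_real_Ici_le hx
      _ ≤ ν.real (Ici x) + ν.real (Ici a) ^ 2 := by
          rw [measureReal_restrict_apply_univ]
          gcongr
          rw [measureReal_restrict_apply measurableSet_Ici]
          exact measureReal_mono inter_subset_left
  rw [compensatedPoisson_eq_conv hpos h_int hp1 a]
  exact (conv_real_Ici_add_le _ _ h x).trans (add_le_add
    (compensatedPoisson_restrict_Iio_real_Ici_le hpos h_int hM hp2 ha hs) hbig)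

lemma le_compensatedPoisson_real_Ici (hpos : ∀ᵐ v ∂ν, 0 < v)
    (h_int : Integrable (fun v : ℝ => v ^ p) ν) (hM : ∫ v, v ^ p ∂ν ≤ M) (hp1 : 1 ≤ p) (hp2 : p ≤ 2)
    (ha : 0 < a) (hs : 0 < s) (hay : a ≤ y) (hxy : x + h + a ^ (1 - p) * M ≤ y) :
    (1 - smallJumpBound p M a h s) * (Real.exp (-ν.real (Ici a)) * ν.real (Ici y)) ≤
      (compensatedPoisson ν).real (Ici x) := by
  have hbig : Real.exp (-ν.real (Ici a)) * ν.real (Ici y) ≤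
      (compensatedPoisson (ν.restrict (Ici a))).real (Ici (x + h)) := by
    have hmean : ∫ v in Ici a, v ∂ν ≤ a ^ (1 - p) * M :=
      (setIntegral_Ici_id_le hpos h_int hp1 ha).trans (by gcongr)
    have hexp := exp_neg_mul_le_compoundPoisson_real (ν := ν.restrict (Ici a))
      (measurableSet_Ici (a := y))
    rw [measureReal_restrict_apply_univ, measureReal_restrict_apply measurableSet_Ici,
      inter_eq_left.2 (Ici_subset_Ici.2 hay)] at hexp
    rw [compensatedPoisson_real_Ici]
    calc Real.exp (-ν.real (Ici a)) * ν.real (Ici y)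
        ≤ Real.exp (-ν.real (Ici a)) * ((Measure.dirac 0).real (Ici y) + ν.real (Ici y)) := by
          gcongr
          exact le_add_of_nonneg_left measureReal_nonneg
      _ ≤ (compoundPoisson (ν.restrict (Ici a))).real (Ici y) := hexp
      _ ≤ _ := measureReal_mono (Ici_subset_Ici.2 (by linarith))
  have hconv := mul_le_conv_real_Ici_add (compensatedPoisson (ν.restrict (Iio a)))
    (compensatedPoisson (ν.restrict (Ici a))) (-h) (x + h)
  rw [← compensatedPoisson_eq_conv hpos h_int hp1 a, show -h + (x + h) = x by ring] at hconv
  refine le_trans ?_ hconv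
  gcongr
  exact one_sub_le_compensatedPoisson_restrict_Iio_real_Ici_neg hpos h_int hM hp2 ha hs

end SmallAndBigJumps

section Truncation

section LevyContinuity

variable {E : Type*} [NormedAddCommGroup E] [InnerProductSpace ℝ E] [FiniteDimensional ℝ E]
  [MeasurableSpace E] [BorelSpace E] {P : ℕ → Measure E} [hP : ∀ n, IsProbabilityMeasure (P n)]
  {P₀ : Measure E} [hP₀ : IsProbabilityMeasure P₀] {C : ℝ}

lemma measureReal_le_of_tendsto_charFun_of_isOpen
    (hlim : ∀ θ, Tendsto (fun n => charFun (P n) θ) atTop (𝓝 (charFun P₀ θ))) {G : Set E}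
    (hG : IsOpen G) (hC : ∀ᶠ n in atTop, (P n).real G ≤ C) : P₀.real G ≤ C := by
  have hweak : Tendsto (β := ProbabilityMeasure E) (fun n => ⟨P n, hP n⟩) atTop (𝓝 ⟨P₀, hP₀⟩) :=
    ProbabilityMeasure.tendsto_of_tendsto_charFun hlim
  obtain ⟨n, hn⟩ := hC.exists
  have hC0 : 0 ≤ C := measureReal_nonneg.trans hn
  refine ENNReal.toReal_le_of_le_ofReal hC0 ?_
  refine (ProbabilityMeasure.le_liminf_measure_open_of_tendsto hweak hG).trans
    (liminf_le_of_frequently_le' (Eventually.frequently ?_))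
  filter_upwards [hC] with n hn
  exact (ENNReal.le_ofReal_iff_toReal_le (measure_ne_top (P n) G) hC0).2 hn

lemma le_measureReal_of_tendsto_charFun_of_isClosed
    (hlim : ∀ θ, Tendsto (fun n => charFun (P n) θ) atTop (𝓝 (charFun P₀ θ))) {F : Set E}
    (hF : IsClosed F) (hC : ∀ᶠ n in atTop, C ≤ (P n).real F) : C ≤ P₀.real F := by
  have h : P₀.real Fᶜ ≤ 1 - C := by
    refine measureReal_le_of_tendsto_charFun_of_isOpen hlim hF.isOpen_compl ?_
    filter_upwards [hC] with n hn
    rw [probReal_compl_eq_one_sub hF.measurableSet]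
    gcongr
  rw [probReal_compl_eq_one_sub hF.measurableSet] at h
  linarith

end LevyContinuity

lemma norm_levyKernel_le {p : ℝ} (hp1 : 1 ≤ p) (hp2 : p ≤ 2) (θ v : ℝ) :
    ‖levyKernel θ v‖ ≤ 3 * |θ * v| ^ p := by
  have hnorm : ‖(θ * v * Complex.I : ℂ)‖ = |θ * v| := by
    rw [← Complex.ofReal_mul, norm_mul, Complex.norm_I, mul_one, Complex.norm_real,
      Real.norm_eq_abs]
  have hnonneg : 0 ≤ |θ * v| ^ p := by positivity
  rcases le_total |θ * v| 1 with hle | hge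
  · have hsq : |θ * v| ^ 2 ≤ |θ * v| ^ p := by
      rw [← Real.rpow_two]
      exact Real.rpow_le_rpow_of_exponent_ge_of_imp (abs_nonneg _) hle hp2 (by intros; linarith)
    have h := Complex.norm_exp_sub_one_sub_id_le (hnorm.trans_le hle)
    rw [hnorm] at h
    exact h.trans (by linarith)
  · calc ‖levyKernel θ v‖ ≤ ‖Complex.exp (θ * v * Complex.I)‖ + ‖(1 : ℂ)‖
          + ‖(θ * v * Complex.I : ℂ)‖ := norm_sub_le_of_le (norm_sub_le _ _) le_rfl
      _ = 2 + |θ * v| := by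
        rw [hnorm, ← Complex.ofReal_mul, Complex.norm_exp_ofReal_mul_I, norm_one]
        norm_num
      _ ≤ 3 * |θ * v| := by linarith
      _ ≤ 3 * |θ * v| ^ p := by
        gcongr
        exact Real.self_le_rpow_of_one_le hge hp1

variable {μ : Measure ℝ} {p : ℝ}

lemma integrable_levyKernel (hpos : ∀ᵐ v ∂μ, 0 < v) (h_int : Integrable (fun v : ℝ => v ^ p) μ)
    (hp1 : 1 ≤ p) (hp2 : p ≤ 2) (θ : ℝ) : Integrable (levyKernel θ) μ := by
  refine (h_int.const_mul (3 * |θ| ^ p)).mono' (by fun_prop) ?_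
  filter_upwards [hpos] with v hv
  refine (norm_levyKernel_le hp1 hp2 θ v).trans_eq ?_
  rw [abs_mul, abs_of_pos hv, Real.mul_rpow (abs_nonneg θ) hv.le, mul_assoc]

lemma isFiniteMeasure_restrict_Ici (hpos : ∀ᵐ v ∂μ, 0 < v)
    (h_int : Integrable (fun v : ℝ => v ^ p) μ) (hp : 0 ≤ p) {δ : ℝ} (hδ : 0 < δ) :
    IsFiniteMeasure (μ.restrict (Ici δ)) :=
  ⟨by simpa using measure_Ici_lt_top_of_integrable_rpow hpos h_int hp hδ⟩

lemma setIntegral_rpow_le (hpos : ∀ᵐ v ∂μ, 0 < v) (h_int : Integrable (fun v : ℝ => v ^ p) μ)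
    (s : Set ℝ) : ∫ v in s, v ^ p ∂μ ≤ ∫ v, v ^ p ∂μ :=
  setIntegral_le_integral h_int (hpos.mono fun _ hv => Real.rpow_nonneg hv.le p)

namespace IsCenteredPoissonLaw

variable {π : Measure ℝ} {a h s x y : ℝ}

lemma tendsto_charFun_compensatedPoisson_restrict_Ici (hπ : IsCenteredPoissonLaw μ π)
    (hpos : ∀ᵐ v ∂μ, 0 < v) (h_int : Integrable (fun v : ℝ => v ^ p) μ) (hp1 : 1 ≤ p) (hp2 : p ≤ 2)
    (θ : ℝ) : Tendsto (fun n : ℕ => charFun (compensatedPoisson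
      (μ.restrict (Ici (1 / ((n : ℝ) + 1))))) θ) atTop (𝓝 (charFun π θ)) := by
  have hfin (n : ℕ) := isFiniteMeasure_restrict_Ici hpos h_int (by linarith)
    (Nat.one_div_pos_of_nat (α := ℝ) (n := n))
  have hunion : ∀ᵐ v ∂μ, v ∈ ⋃ n : ℕ, Ici (1 / ((n : ℝ) + 1)) := by
    filter_upwards [hpos] with v hv
    obtain ⟨n, hn⟩ := exists_nat_one_div_lt hv
    exact mem_iUnion_of_mem n hn.le
  have hlim := tendsto_setIntegral_of_monotone (s := fun n : ℕ => Ici (1 / ((n : ℝ) + 1)))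
    (fun n => measurableSet_Ici) (fun _ _ hij => Ici_subset_Ici.2 (Nat.one_div_le_one_div hij))
    (integrable_levyKernel hpos h_int hp1 hp2 θ).integrableOn
  rw [Measure.restrict_eq_self_of_ae_mem hunion] at hlim
  rw [hπ θ]
  refine ((Complex.continuous_exp.tendsto _).comp hlim).congr fun n => ?_
  exact (isCenteredPoissonLaw_compensatedPoisson
    (integrable_id_of_integrable_rpow (ae_restrict_of_ae hpos) h_int.integrableOn hp1) θ).symm

variable [IsProbabilityMeasure π]

lemma real_Ioi_le (hπ : IsCenteredPoissonLaw μ π) (hpos : ∀ᵐ v ∂μ, 0 < v)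
    (h_int : Integrable (fun v : ℝ => v ^ p) μ) (hp1 : 1 ≤ p) (hp2 : p ≤ 2)
    (ha : 0 < a) (hs : 0 < s) (hx : 0 < x) : π.real (Ioi (h + x)) ≤
      smallJumpBound p (∫ v, v ^ p ∂μ) a h s + (μ.real (Ici x) + μ.real (Ici a) ^ 2) := by
  have hfin (n : ℕ) := isFiniteMeasure_restrict_Ici hpos h_int (by linarith)
    (Nat.one_div_pos_of_nat (α := ℝ) (n := n))
  have htail (n : ℕ) {z : ℝ} (hz : 0 < z) :
      (μ.restrict (Ici (1 / ((n : ℝ) + 1)))).real (Ici z) ≤ μ.real (Ici z) := by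
    rw [measureReal_restrict_apply measurableSet_Ici]
    exact measureReal_mono inter_subset_left
      (measure_Ici_lt_top_of_integrable_rpow hpos h_int (by linarith) hz).ne
  refine measureReal_le_of_tendsto_charFun_of_isOpen
    (hπ.tendsto_charFun_compensatedPoisson_restrict_Ici hpos h_int hp1 hp2) isOpen_Ioi
    (Eventually.of_forall fun n => ?_)
  refine (measureReal_mono Ioi_subset_Ici_self).trans <|
    (compensatedPoisson_real_Ici_le (ae_restrict_of_ae hpos) h_int.integrableOn
      (setIntegral_rpow_le hpos h_int _) hp1 hp2 ha hs hx).trans ?_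
  gcongr
  exacts [htail n hx, htail n ha]

lemma le_real_Ici (hπ : IsCenteredPoissonLaw μ π) (hpos : ∀ᵐ v ∂μ, 0 < v)
    (h_int : Integrable (fun v : ℝ => v ^ p) μ) (hp1 : 1 ≤ p) (hp2 : p ≤ 2)
    (ha : 0 < a) (hs : 0 < s) (hay : a ≤ y) (hxy : x + h + a ^ (1 - p) * ∫ v, v ^ p ∂μ ≤ y) :
    (1 - smallJumpBound p (∫ v, v ^ p ∂μ) a h s) *
      (Real.exp (-μ.real (Ici a)) * μ.real (Ici y)) ≤ π.real (Ici x) := by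
  have hfin (n : ℕ) := isFiniteMeasure_restrict_Ici hpos h_int (by linarith)
    (Nat.one_div_pos_of_nat (α := ℝ) (n := n))
  refine le_measureReal_of_tendsto_charFun_of_isClosed
    (hπ.tendsto_charFun_compensatedPoisson_restrict_Ici hpos h_int hp1 hp2) isClosed_Ici ?_
  filter_upwards [tendsto_one_div_add_atTop_nhds_zero_nat.eventually_le_const ha] with n hn
  have htail {z : ℝ} (hz : a ≤ z) :
      (μ.restrict (Ici (1 / ((n : ℝ) + 1)))).real (Ici z) = μ.real (Ici z) := by
    rw [measureReal_restrict_apply measurableSet_Ici,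
      inter_eq_left.2 (Ici_subset_Ici.2 (hn.trans hz))]
  rw [← htail le_rfl, ← htail hay]
  exact le_compensatedPoisson_real_Ici (ae_restrict_of_ae hpos) h_int.integrableOn
    (setIntegral_rpow_le hpos h_int _) hp1 hp2 ha hs hay hxy

end IsCenteredPoissonLaw

end Truncation

section OneBigJump

/-- Chernoff's parameter `log z / (2 a)` turns the bound into a power of `z`. -/
lemma eventually_smallJumpBound_le {p ε : ℝ} (hp : 1 ≤ p) (hε : 0 < ε) (M η : ℝ) :
    ∀ᶠ z in atTop, ∀ y : ℝ, 1 ≤ y →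
      smallJumpBound p (y / z * M) (ε * y) (η * y) (Real.log z / (2 * (ε * y))) ≤
        Real.exp 1 * z ^ (-(η / (2 * ε))) := by
  have hlim : Tendsto (fun z : ℝ => ε ^ (-p) * M / 4 * (Real.log z ^ (2 : ℝ) / z ^ (1 / 2 : ℝ)))
      atTop (𝓝 0) := by
    simpa only [mul_zero] using
      (isLittleO_log_rpow_rpow_atTop 2 one_half_pos).tendsto_div_nhds_zero.const_mul
        (ε ^ (-p) * M / 4)
  filter_upwards [hlim.eventually_le_const one_pos, eventually_gt_atTop 0] with z hz1 hz y hy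
  have hy0 : 0 < y := one_pos.trans_le hy
  set s := Real.log z / (2 * (ε * y)) with hs
  have hsa : Real.exp (s * (ε * y)) = z / z ^ (1 / 2 : ℝ) := by
    rw [← Real.rpow_one_sub' hz.le (by norm_num), Real.rpow_def_of_pos hz, hs]
    congr 1
    field_simp
    norm_num
  have hsh : s * (η * y) = Real.log z * (η / (2 * ε)) := by
    rw [hs]
    field_simp
  have hquad : s ^ 2 * Real.exp (s * (ε * y)) * ((ε * y) ^ (2 - p) * (y / z * M)) ≤ 1 :=
    calc s ^ 2 * Real.exp (s * (ε * y)) * ((ε * y) ^ (2 - p) * (y / z * M))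
        = ε ^ (-p) * M / 4 * (Real.log z ^ (2 : ℝ) / z ^ (1 / 2 : ℝ)) * y ^ (1 - p) := by
          rw [hsa, hs, sub_eq_add_neg, sub_eq_add_neg, Real.rpow_add (mul_pos hε hy0),
            Real.rpow_add hy0, Real.rpow_one, Real.rpow_two, Real.rpow_two,
            Real.mul_rpow hε.le hy0.le]
          field_simp
          ring
      _ ≤ 1 * 1 := by
          gcongr
          exact Real.rpow_le_one_of_one_le_of_nonpos hy (by linarith)
      _ = 1 := one_mul 1
  rw [smallJumpBound, Real.rpow_def_of_pos hz, ← Real.exp_add, Real.exp_le_exp, hsh]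
  linarith

variable {ι : Type*} {l : Filter ι} {lam y : ι → ℝ} {Λ : ℝ}

lemma tendsto_div_atTop_of_mem_Ioc (hlam : ∀ᶠ i in l, lam i ∈ Ioc 0 Λ) (hy : Tendsto y l atTop) :
    Tendsto (fun i => y i / lam i) l atTop := by
  refine tendsto_atTop_mono' l ?_ (hy.atTop_div_const (show 0 < max Λ 1 by positivity))
  filter_upwards [hlam, hy.eventually_ge_atTop 0] with i hi hyi
  exact div_le_div_of_nonneg_left hyi hi.1 (hi.2.trans (le_max_left _ _))

lemma eventually_drift_le {p ε η : ℝ} (hp : 1 < p) (hε : 0 < ε) (hη : 0 < η)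
    (hlam : ∀ᶠ i in l, lam i ∈ Ioc 0 Λ) (hy : Tendsto y l atTop) {M : ℝ} (hM : 0 ≤ M) :
    ∀ᶠ i in l, (ε * y i) ^ (1 - p) * (lam i * M) ≤ η * y i := by
  have hlim := ((tendsto_rpow_neg_atTop (show 0 < p - 1 by linarith)).comp
    (hy.const_mul_atTop hε)).mul_const (Λ * M)
  rw [zero_mul] at hlim
  filter_upwards [hlam, hy.eventually_ge_atTop 1, hlim.eventually_le_const hη] with i hi hyi hle
  rw [Function.comp_apply, neg_sub] at hle
  calc (ε * y i) ^ (1 - p) * (lam i * M) ≤ (ε * y i) ^ (1 - p) * (Λ * M) := by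
        gcongr
        exact hi.2
    _ ≤ η := hle
    _ ≤ η * y i := le_mul_of_one_le_right hη.le hyi

namespace IsRegularlyVarying

variable {T : ℝ → ℝ} {m p ε η : ℝ}

lemma tendsto_zero (hT : IsRegularlyVarying T (-m)) (hanti : AntitoneOn T (Ioi 0))
    (hnonneg : ∀ y, 0 ≤ T y) (hm : 0 < m) : Tendsto T atTop (𝓝 0) := by
  obtain ⟨y₀, hpotter, hy₀⟩ := ((hT.eventually_mul_le hanti hnonneg
    (show -m < -(m / 2) by linarith)).and (eventually_gt_atTop 0)).exists
  have hlim := (((tendsto_rpow_neg_atTop (half_pos hm)).comp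
    (tendsto_id.atTop_div_const hy₀)).const_mul (2 ^ |-(m / 2)|)).mul_const (T y₀)
  rw [mul_zero, zero_mul] at hlim
  refine squeeze_zero' (Eventually.of_forall hnonneg) ?_ hlim
  filter_upwards [eventually_ge_atTop y₀] with y hy
  have h := hpotter (y / y₀) ((one_le_div hy₀).2 hy)
  rwa [div_mul_cancel₀ _ hy₀.ne'] at h

lemma tendsto_rpow_div_mul_tail (hT : IsRegularlyVarying T (-m)) (hanti : AntitoneOn T (Ioi 0))
    (hnonneg : ∀ y, 0 ≤ T y) (hm : 0 < m) (hlam : ∀ᶠ i in l, lam i ∈ Ioc 0 Λ)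
    (hy : Tendsto y l atTop) :
    Tendsto (fun i => (y i / lam i) ^ (-(m + 2)) / (lam i * T (y i))) l (𝓝 0) := by
  obtain ⟨c, hc, hlow⟩ := hT.exists_eventually_mul_rpow_le hanti hnonneg
    (show -(m + 1) < -m by linarith)
  have hlim : Tendsto (fun i => Λ ^ (m + 1) / c * (y i)⁻¹) l (𝓝 0) := by
    simpa only [mul_zero, Pi.inv_apply] using hy.inv_tendsto_atTop.const_mul (Λ ^ (m + 1) / c)
  refine squeeze_zero' ?_ ?_ hlim
  · filter_upwards [hlam, hy.eventually_gt_atTop 0] with i hi hyi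
    have := hi.1
    have := hnonneg (y i)
    positivity
  filter_upwards [hlam, hy.eventually hlow, hy.eventually_gt_atTop 0] with i hi hlowi hyi
  have hi0 := hi.1
  calc (y i / lam i) ^ (-(m + 2)) / (lam i * T (y i))
      ≤ (y i / lam i) ^ (-(m + 2)) / (lam i * (c * y i ^ (-(m + 1)))) := by gcongr
    _ = lam i ^ (m + 1) / c * (y i)⁻¹ := by
      rw [show -(m + 2) = -(m + 1) + -1 by ring, Real.rpow_add (div_pos hyi hi0),
        Real.rpow_neg_one, Real.div_rpow hyi.le hi0.le, Real.rpow_neg hi0.le]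
      field_simp
    _ ≤ Λ ^ (m + 1) / c * (y i)⁻¹ := by
      gcongr
      exact hi.2

lemma tendsto_smallJumpBound_div (hT : IsRegularlyVarying T (-m)) (hanti : AntitoneOn T (Ioi 0))
    (hnonneg : ∀ y, 0 ≤ T y) (hm : 0 < m) (hp : 1 ≤ p) (hε : 0 < ε)
    (hη : η / (2 * ε) = m + 2) (hlam : ∀ᶠ i in l, lam i ∈ Ioc 0 Λ) (hy : Tendsto y l atTop)
    (M : ℝ) : Tendsto (fun i => smallJumpBound p (lam i * M) (ε * y i) (η * y i)
      (Real.log (y i / lam i) / (2 * (ε * y i))) / (lam i * T (y i))) l (𝓝 0) := by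
  have hlim := (hT.tendsto_rpow_div_mul_tail hanti hnonneg hm hlam hy).const_mul (Real.exp 1)
  rw [mul_zero] at hlim
  refine squeeze_zero' ?_ ?_ hlim
  · filter_upwards [hlam] with i hi
    exact div_nonneg (Real.exp_nonneg _) (mul_nonneg hi.1.le (hnonneg _))
  filter_upwards [hlam, hy.eventually_ge_atTop 1, (tendsto_div_atTop_of_mem_Ioc hlam hy).eventually
    (eventually_smallJumpBound_le hp hε M η)] with i hi hyi hbound
  have h := hbound (y i) hyi
  rw [div_div_cancel₀ (by linarith), hη] at h
  rw [mul_div_assoc']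
  exact div_le_div_of_nonneg_right h (mul_nonneg hi.1.le (hnonneg _))

lemma tendsto_mul_tail (hT : IsRegularlyVarying T (-m)) (hanti : AntitoneOn T (Ioi 0))
    (hnonneg : ∀ y, 0 ≤ T y) (hm : 0 < m) (hlam : ∀ᶠ i in l, lam i ∈ Ioc 0 Λ)
    (hy : Tendsto y l atTop) {c : ℝ} (hc : 0 < c) :
    Tendsto (fun i => lam i * T (c * y i)) l (𝓝 0) := by
  have hlim := ((hT.tendsto_zero hanti hnonneg hm).comp (hy.const_mul_atTop hc)).const_mul Λ
  rw [mul_zero] at hlim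
  refine squeeze_zero' ?_ ?_ hlim
  · filter_upwards [hlam] with i hi using mul_nonneg hi.1.le (hnonneg _)
  · filter_upwards [hlam] with i hi using mul_le_mul_of_nonneg_right hi.2 (hnonneg _)

lemma tendsto_smallJumpBound (hT : IsRegularlyVarying T (-m)) (hanti : AntitoneOn T (Ioi 0))
    (hnonneg : ∀ y, 0 ≤ T y) (hm : 0 < m) (hp : 1 ≤ p) (hε : 0 < ε) (hη : η / (2 * ε) = m + 2)
    (hlam : ∀ᶠ i in l, lam i ∈ Ioc 0 Λ) (hy : Tendsto y l atTop) (M : ℝ) :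
    Tendsto (fun i => smallJumpBound p (lam i * M) (ε * y i) (η * y i)
      (Real.log (y i / lam i) / (2 * (ε * y i)))) l (𝓝 0) := by
  have hlim := (hT.tendsto_smallJumpBound_div hanti hnonneg hm hp hε hη hlam hy M).mul
    (hT.tendsto_mul_tail hanti hnonneg hm hlam hy one_pos)
  rw [mul_zero] at hlim
  refine hlim.congr' ?_
  filter_upwards [hlam, hy.eventually_gt_atTop 0] with i hi hyi
  have := hT.pos_of_antitoneOn hanti hnonneg hyi
  rw [one_mul, div_mul_cancel₀ _ (mul_pos hi.1 this).ne']

lemma tendsto_mul_tail_div (hT : IsRegularlyVarying T (-m)) (hlam : ∀ᶠ i in l, lam i ∈ Ioc 0 Λ)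
    (hy : Tendsto y l atTop) {c : ℝ} (hc : 0 < c) :
    Tendsto (fun i => lam i * T (c * y i) / (lam i * T (y i))) l (𝓝 (c ^ (-m))) := by
  refine ((hT c hc).comp hy).congr' ?_
  filter_upwards [hlam] with i hi
  exact (mul_div_mul_left _ _ hi.1.ne').symm

end IsRegularlyVarying

variable {ν : Measure ℝ} {π : ι → Measure ℝ} [∀ i, IsProbabilityMeasure (π i)] {m p : ℝ}
  (hpos : ∀ᵐ v ∂ν, 0 < v) (h_int : Integrable (fun v : ℝ => v ^ p) ν) (hp1 : 1 < p) (hp2 : p ≤ 2)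
  (hreg : IsRegularlyVarying (fun y => ν.real (Ici y)) (-m)) (hm : 0 < m)
  (hlam : ∀ᶠ i in l, lam i ∈ Ioc 0 Λ) (hy : Tendsto y l atTop)
  (hπ : ∀ᶠ i in l, IsCenteredPoissonLaw (ENNReal.ofReal (lam i) • ν) (π i))

include hpos h_int hp1 hp2 hreg hm hlam hy hπ

/-- Up to events of negligible probability, the jumps below `ε * y` add up to at most `η * y` after
centering and there is at most one jump above `ε * y`, which must then exceed `(1 - 2 * η) * y`. -/
lemma eventually_real_Ici_div_lt {η b : ℝ} (hη0 : 0 < η) (hη : η < 1 / 2)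
    (hb : (1 - 2 * η) ^ (-m) < b) :
    ∀ᶠ i in l, (π i).real (Ici (y i)) / (lam i * ν.real (Ici (y i))) < b := by
  have hanti := antitoneOn_measureReal_Ici fun z hz =>
    (measure_Ici_lt_top_of_integrable_rpow hpos h_int (by linarith) hz).ne
  have hnonneg (z : ℝ) : 0 ≤ ν.real (Ici z) := measureReal_nonneg
  have hc : 0 < 1 - 2 * η := by linarith
  obtain ⟨ε, hε, hηε⟩ : ∃ ε > 0, η / (2 * ε) = m + 2 :=
    ⟨η / (2 * (m + 2)), by positivity, by field_simp⟩
  have htwo := (hreg.tendsto_mul_tail hanti hnonneg hm hlam hy hε).mul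
    (hreg.tendsto_mul_tail_div hlam hy hε)
  have hsum := (hreg.tendsto_smallJumpBound_div hanti hnonneg hm hp1.le hε hηε hlam hy
    (∫ v, v ^ p ∂ν)).add ((hreg.tendsto_mul_tail_div hlam hy hc).add htwo)
  rw [zero_mul, add_zero, zero_add] at hsum
  filter_upwards [hsum.eventually_lt_const hb, hlam, hπ, hy.eventually_gt_atTop 0,
    (tendsto_div_atTop_of_mem_Ioc hlam hy).eventually_gt_atTop 1] with i hlt hi hπi hyi hzi
  refine lt_of_le_of_lt ?_ hlt
  have hs : 0 < Real.log (y i / lam i) / (2 * (ε * y i)) :=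
    div_pos (Real.log_pos hzi) (by positivity)
  have hupper := hπi.real_Ioi_le (h := η * y i) (Measure.ae_smul_measure hpos _)
    (h_int.smul_measure ENNReal.ofReal_ne_top) hp1.le hp2 (mul_pos hε hyi) hs (mul_pos hc hyi)
  simp only [measureReal_ennreal_smul_apply, integral_smul_measure,
    ENNReal.toReal_ofReal hi.1.le, smul_eq_mul] at hupper
  have hsub : Ici (y i) ⊆ Ioi (η * y i + (1 - 2 * η) * y i) :=
    fun z (hz : y i ≤ z) => show _ < z by nlinarith
  rw [mul_div_assoc', ← add_div, ← add_div, ← sq]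
  exact div_le_div_of_nonneg_right ((measureReal_mono hsub).trans hupper)
    (mul_nonneg hi.1.le measureReal_nonneg)

/-- A single jump above `(1 + 2 * η) * y` suffices: the centering and the jumps below `ε * y` take
away at most `2 * η * y`, up to an event of negligible probability. -/
lemma eventually_lt_real_Ici_div {η b : ℝ} (hη0 : 0 < η) (hb : b < (1 + 2 * η) ^ (-m)) :
    ∀ᶠ i in l, b < (π i).real (Ici (y i)) / (lam i * ν.real (Ici (y i))) := by
  have hanti := antitoneOn_measureReal_Ici fun z hz =>
    (measure_Ici_lt_top_of_integrable_rpow hpos h_int (by linarith) hz).ne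
  have hnonneg (z : ℝ) : 0 ≤ ν.real (Ici z) := measureReal_nonneg
  have hc : 0 < 1 + 2 * η := by linarith
  obtain ⟨ε, hε, hηε, hεη⟩ : ∃ ε > 0, η / (2 * ε) = m + 2 ∧ ε ≤ η :=
    ⟨η / (2 * (m + 2)), by positivity, by field_simp, div_le_self hη0.le (by linarith)⟩
  set M := ∫ v, v ^ p ∂ν
  have hM : 0 ≤ M := integral_nonneg_of_ae (hpos.mono fun v hv => Real.rpow_nonneg hv.le p)
  have hsmall := hreg.tendsto_smallJumpBound hanti hnonneg hm hp1.le hε hηε hlam hy M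
  have hnone := ((Real.continuous_exp.tendsto _).comp
    (hreg.tendsto_mul_tail hanti hnonneg hm hlam hy hε).neg)
  have hprod := (hsmall.const_sub 1).mul (hnone.mul (hreg.tendsto_mul_tail_div hlam hy hc))
  rw [neg_zero, Real.exp_zero, sub_zero, one_mul, one_mul] at hprod
  filter_upwards [hprod.eventually_const_lt hb, hlam, hπ, hy.eventually_gt_atTop 0,
    (tendsto_div_atTop_of_mem_Ioc hlam hy).eventually_gt_atTop 1,
    eventually_drift_le hp1 hε hη0 hlam hy hM] with i hlt hi hπi hyi hzi hdrift
  refine lt_of_lt_of_le hlt ?_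
  have hs : 0 < Real.log (y i / lam i) / (2 * (ε * y i)) :=
    div_pos (Real.log_pos hzi) (by positivity)
  have hlower := hπi.le_real_Ici (x := y i) (h := η * y i) (y := (1 + 2 * η) * y i) (p := p)
    (Measure.ae_smul_measure hpos _) (h_int.smul_measure ENNReal.ofReal_ne_top)
    hp1.le hp2 (mul_pos hε hyi) hs
  simp only [measureReal_ennreal_smul_apply, integral_smul_measure,
    ENNReal.toReal_ofReal hi.1.le, smul_eq_mul] at hlower
  rw [mul_div_assoc', mul_div_assoc']
  refine div_le_div_of_nonneg_right (hlower ?_ ?_) (mul_nonneg hi.1.le measureReal_nonneg)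
  · exact mul_le_mul_of_nonneg_right (by linarith) hyi.le
  · linarith

/-- The principle of a single big jump, uniformly in bounded intensities. -/
theorem tendsto_real_Ici_div_mul_tail :
    Tendsto (fun i => (π i).real (Ici (y i)) / (lam i * ν.real (Ici (y i)))) l (𝓝 1) := by
  have hcont (k : ℝ) : Tendsto (fun η : ℝ => (1 + k * η) ^ (-m)) (𝓝[>] 0) (𝓝 1) := by
    have h : ContinuousAt (fun η : ℝ => (1 + k * η) ^ (-m)) 0 :=
      ContinuousAt.rpow_const (by fun_prop) (Or.inl (by simp))
    simpa only [mul_zero, add_zero, Real.one_rpow] using h.tendsto.mono_left nhdsWithin_le_nhds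
  have hη : ∀ᶠ η : ℝ in 𝓝[>] 0, η ∈ Ioo 0 (1 / 2) := Ioo_mem_nhdsGT one_half_pos
  refine tendsto_order.2 ⟨fun b hb => ?_, fun b hb => ?_⟩
  · obtain ⟨η, ⟨hη0, -⟩, hbη⟩ := (hη.and ((hcont 2).eventually_const_lt hb)).exists
    exact eventually_lt_real_Ici_div hpos h_int hp1 hp2 hreg hm hlam hy hπ hη0 hbη
  · obtain ⟨η, ⟨hη0, hη1⟩, hbη⟩ := (hη.and ((hcont (-2)).eventually_lt_const hb)).exists
    rw [neg_mul, ← sub_eq_add_neg] at hbη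
    exact eventually_real_Ici_div_lt hpos h_int hp1 hp2 hreg hm hlam hy hπ hη0 hη1 hbη

end OneBigJump

section Telecom

variable {γ t q : ℝ}

lemma measurable_ellK (t : ℝ) : Measurable fun z : ℝ × ℝ => ellK t z.1 z.2 := by
  unfold ellK
  fun_prop

lemma ellK_mul {r : ℝ} (hr : 0 ≤ r) (t s u : ℝ) :
    ellK (r * t) (r * s) (r * u) = r * ellK t s u := by
  simp only [ellK, mul_max_of_nonneg _ _ hr, mul_min_of_nonneg _ _ hr, mul_sub, mul_add, mul_zero]

lemma le_ellK_iff {x s u : ℝ} (hx : 0 < x) :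
    x ≤ ellK t s u ↔ x ≤ u ∧ x ≤ t ∧ s ∈ Icc (x - u) (t - x) := by
  simp only [ellK, le_max_iff, le_sub_iff_add_le, le_min_iff, ← max_add_add_left, max_le_iff,
    hx.not_ge, false_or, mem_Icc]
  constructor
  · rintro ⟨⟨h₁, h₂⟩, h₃, h₄⟩
    exact ⟨by linarith, by linarith, by linarith, by linarith⟩
  · rintro ⟨h₁, h₂, h₃, h₄⟩
    exact ⟨⟨by linarith, by linarith⟩, by linarith, by linarith⟩

instance (γ : ℝ) : SFinite (muU γ) := by
  unfold muU
  infer_instance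

instance (γ t : ℝ) : SFinite (muEll γ t) := by
  unfold muEll
  infer_instance

lemma ae_muEll_mem_Ioc (γ : ℝ) (ht : 0 ≤ t) : ∀ᵐ w ∂muEll γ t, w ∈ Ioc 0 t := by
  have hle (s u : ℝ) : ellK t s u ≤ t :=
    max_le ht ((sub_le_self _ (le_max_right _ _)).trans (min_le_right _ _))
  have hle_ae : ∀ᵐ w ∂muEll γ t, w ∈ Iic t :=
    ae_restrict_of_ae ((ae_map_iff (measurable_ellK t).aemeasurable measurableSet_Iic).2
      (ae_of_all _ fun z => hle z.1 z.2))
  filter_upwards [ae_restrict_mem measurableSet_Ioi, hle_ae] with w hpos hw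
  exact ⟨hpos, hw⟩

lemma lintegral_muU {g : ℝ → ℝ≥0∞} (hg : Measurable g) (γ : ℝ) :
    ∫⁻ u, g u ∂muU γ = ∫⁻ u in Ioi 0, ENNReal.ofReal (u ^ (-γ - 1)) * g u := by
  rw [muU, lintegral_withDensity_eq_lintegral_mul _ (by fun_prop) hg]
  rfl

lemma map_mul_left_muU (γ : ℝ) (ht : 0 < t) :
    (muU γ).map (t * ·) = ENNReal.ofReal (t ^ γ) • muU γ := by
  refine Measure.ext_of_lintegral _ fun g hg => ?_
  have hdensity : Measurable fun u : ℝ => ENNReal.ofReal (u ^ (-γ - 1)) * g u := by fun_prop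
  calc ∫⁻ u, g u ∂(muU γ).map (t * ·)
      = ∫⁻ u in Ioi 0, ENNReal.ofReal (u ^ (-γ - 1)) * g (t * u) := by
        rw [lintegral_map hg (by fun_prop), lintegral_muU (by fun_prop)]
    _ = ∫⁻ u in (t * ·) ⁻¹' Ioi 0, ENNReal.ofReal (t ^ (γ + 1)) *
          (ENNReal.ofReal ((t * u) ^ (-γ - 1)) * g (t * u)) := by
        rw [preimage_const_mul_Ioi₀ _ ht, zero_div]
        refine setLIntegral_congr_fun measurableSet_Ioi fun u (hu : 0 < u) => ?_
        rw [← mul_assoc, ← ENNReal.ofReal_mul (by positivity), Real.mul_rpow ht.le hu.le,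
          ← mul_assoc, ← Real.rpow_add ht, neg_sub_left, add_comm γ 1, add_neg_cancel,
          Real.rpow_zero, one_mul]
    _ = ENNReal.ofReal (t ^ (γ + 1)) * ∫⁻ v in Ioi 0, ENNReal.ofReal (v ^ (-γ - 1)) * g v
          ∂(volume.map (t * ·)) := by
        rw [setLIntegral_map measurableSet_Ioi hdensity (by fun_prop),
          lintegral_const_mul _ (by fun_prop)]
    _ = ∫⁻ v, g v ∂(ENNReal.ofReal (t ^ γ) • muU γ) := by
        rw [Real.map_volume_mul_left ht.ne', Measure.restrict_smul, lintegral_smul_measure,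
          lintegral_smul_measure, ← lintegral_muU hg, smul_eq_mul, smul_eq_mul, ← mul_assoc,
          ← ENNReal.ofReal_mul (by positivity), abs_of_pos (inv_pos.2 ht),
          Real.rpow_add_one ht.ne', mul_inv_cancel_right₀ ht.ne']

lemma prod_muU_eq_smul_map (γ : ℝ) (ht : 0 < t) :
    (volume : Measure ℝ).prod (muU γ) = ENNReal.ofReal (t ^ (1 - γ)) •
      ((volume : Measure ℝ).prod (muU γ)).map (Prod.map (t * ·) (t * ·)) := by
  rw [← Measure.map_prod_map _ _ (by fun_prop) (by fun_prop), map_mul_left_muU γ ht,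
    Real.map_volume_mul_left ht.ne', Measure.prod_smul_left, Measure.prod_smul_right, smul_smul,
    smul_smul, ← ENNReal.ofReal_mul (by positivity), ← ENNReal.ofReal_mul (by positivity),
    abs_of_pos (inv_pos.2 ht), Real.rpow_sub ht, Real.rpow_one]
  have : t / t ^ γ * t⁻¹ * t ^ γ = 1 := by field_simp
  rw [this, ENNReal.ofReal_one, one_smul]

lemma map_mul_left_restrict_Ioi (μ : Measure ℝ) (ht : 0 < t) :
    (μ.restrict (Ioi 0)).map (t * ·) = (μ.map (t * ·)).restrict (Ioi 0) := by
  rw [Measure.restrict_map (by fun_prop) measurableSet_Ioi, preimage_const_mul_Ioi₀ _ ht, zero_div]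

lemma muEll_eq_smul_map (γ : ℝ) (ht : 0 < t) :
    muEll γ t = ENNReal.ofReal (t ^ (1 - γ)) • (muEll γ 1).map (t * ·) := by
  have hcomp : (fun z : ℝ × ℝ => ellK t z.1 z.2) ∘ Prod.map (t * ·) (t * ·) =
      (t * ·) ∘ fun z : ℝ × ℝ => ellK 1 z.1 z.2 := by
    ext z
    have h := ellK_mul ht.le 1 z.1 z.2
    rwa [mul_one] at h
  rw [muEll, prod_muU_eq_smul_map γ ht, Measure.map_smul, Measure.restrict_smul,
    Measure.map_map (measurable_ellK t) (by fun_prop), hcomp,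
    ← Measure.map_map (by fun_prop) (measurable_ellK 1), ← map_mul_left_restrict_Ioi _ ht, muEll]

lemma muEllR_eq_restrict_mconv (γ t : ℝ) (F : Measure ℝ) :
    muEllR γ t F = (F ∗ₘ muEll γ t).restrict (Ioi 0) := rfl

lemma muEllR_eq_smul_map (γ : ℝ) (ht : 0 < t) (F : Measure ℝ) [SFinite F] :
    muEllR γ t F = ENNReal.ofReal (t ^ (1 - γ)) • (muEllR γ 1 F).map (t * ·) := by
  have hcomp : (fun z : ℝ × ℝ => z.1 * z.2) ∘ Prod.map id (t * ·) =
      (t * ·) ∘ fun z : ℝ × ℝ => z.1 * z.2 := by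
    ext z
    exact mul_left_comm z.1 t z.2
  have hprod : F.prod ((muEll γ 1).map (t * ·)) =
      (F.prod (muEll γ 1)).map (Prod.map id (t * ·)) := by
    rw [← Measure.map_prod_map _ _ measurable_id (by fun_prop), Measure.map_id]
  rw [muEllR, muEll_eq_smul_map γ ht, Measure.prod_smul_right, Measure.map_smul,
    Measure.restrict_smul, hprod, Measure.map_map (by fun_prop) (by fun_prop), hcomp,
    ← Measure.map_map (by fun_prop) (by fun_prop), ← map_mul_left_restrict_Ioi _ ht, muEllR]

lemma volume_setOf_le_ellK {x : ℝ} (hx : 0 < x) (hxt : x ≤ t) (u : ℝ) :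
    volume {s | x ≤ ellK t s u} =
      (Ici x).indicator (fun u => ENNReal.ofReal (t - 2 * x + u)) u := by
  simp only [le_ellK_iff hx]
  by_cases hu : x ≤ u
  · have hset : {s | x ≤ u ∧ x ≤ t ∧ s ∈ Icc (x - u) (t - x)} = Icc (x - u) (t - x) :=
      ext fun s => and_iff_right hu |>.trans (and_iff_right hxt)
    rw [hset, Real.volume_Icc, indicator_of_mem (mem_Ici.2 hu)]
    congr 1
    ring
  · simp only [hu, false_and, ofPred_false, measure_empty, indicator_of_notMem (mem_Ici.not.2 hu)]

lemma muEll_Ici_eq_lintegral {x : ℝ} (hx : 0 < x) (hxt : x ≤ t) (γ : ℝ) :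
    muEll γ t (Ici x) =
      ∫⁻ u in Ioi x, ENNReal.ofReal ((t - 2 * x) * u ^ (-γ - 1) + u ^ (-γ)) := by
  have hsub : Ici x ⊆ Ioi 0 := Ici_subset_Ioi.2 hx
  have hmeas := measurable_ellK t (measurableSet_Ici (a := x))
  calc muEll γ t (Ici x) = ∫⁻ u, volume {s | x ≤ ellK t s u} ∂muU γ := by
        rw [muEll, Measure.restrict_apply measurableSet_Ici, inter_eq_left.2 hsub,
          Measure.map_apply (measurable_ellK t) measurableSet_Ici, Measure.prod_apply_symm hmeas]
        rfl
    _ = ∫⁻ u in Ioi 0, (Ici x).indicator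
          (fun u => ENNReal.ofReal (u ^ (-γ - 1)) * ENNReal.ofReal (t - 2 * x + u)) u := by
        have hsection : Measurable fun u => volume {s | x ≤ ellK t s u} :=
          measurable_measure_prodMk_right hmeas
        rw [lintegral_muU hsection]
        simp only [volume_setOf_le_ellK hx hxt, indicator_mul_right]
    _ = ∫⁻ u in Ioi x, ENNReal.ofReal ((t - 2 * x) * u ^ (-γ - 1) + u ^ (-γ)) := by
        rw [setLIntegral_indicator measurableSet_Ici, inter_eq_left.2 hsub,
          ← Measure.restrict_congr_set Ioi_ae_eq_Ici]
        refine setLIntegral_congr_fun measurableSet_Ioi fun u (hu : x < u) => ?_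
        have hu0 : 0 < u := hx.trans hu
        have hpow : u ^ (-γ - 1) * u = u ^ (-γ) := by
          rw [← Real.rpow_add_one hu0.ne', sub_add_cancel]
        rw [← ENNReal.ofReal_mul (by positivity), mul_add, hpow, mul_comm]

lemma muEll_Ici (hγ : 1 < γ) {x : ℝ} (hx : 0 < x) (hxt : x ≤ t) :
    muEll γ t (Ici x) =
      ENNReal.ofReal (x ^ (-γ) * ((t - x) / γ + x / (γ * (γ - 1)))) := by
  have h_int : IntegrableOn (fun u : ℝ => (t - 2 * x) * u ^ (-γ - 1)) (Ioi x) :=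
    (integrableOn_Ioi_rpow_of_lt (by linarith) hx).const_mul _
  have h_int' : IntegrableOn (fun u : ℝ => u ^ (-γ)) (Ioi x) :=
    integrableOn_Ioi_rpow_of_lt (by linarith) hx
  have hadd : IntegrableOn (fun u : ℝ => (t - 2 * x) * u ^ (-γ - 1) + u ^ (-γ)) (Ioi x) :=
    h_int.add h_int'
  have hnonneg : ∀ᵐ u ∂volume.restrict (Ioi x), 0 ≤ (t - 2 * x) * u ^ (-γ - 1) + u ^ (-γ) := by
    filter_upwards [ae_restrict_mem measurableSet_Ioi] with u (hu : x < u)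
    have hu0 : 0 < u := hx.trans hu
    have hpow : u ^ (-γ) = u ^ (-γ - 1) * u := by
      rw [← Real.rpow_add_one hu0.ne', sub_add_cancel]
    have hu' : 0 ≤ t - 2 * x + u := by linarith
    calc 0 ≤ u ^ (-γ - 1) * (t - 2 * x + u) := by positivity
      _ = _ := by rw [hpow]; ring
  rw [muEll_Ici_eq_lintegral hx hxt, ← ofReal_integral_eq_lintegral_ofReal hadd hnonneg,
    integral_add h_int h_int', integral_const_mul, integral_Ioi_rpow_of_lt (by linarith) hx,
    integral_Ioi_rpow_of_lt (by linarith) hx, sub_add_cancel, Real.rpow_add_one hx.ne']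
  congr 1
  have h₁ : γ ≠ 0 := by linarith
  have h₂ : γ - 1 ≠ 0 := by linarith
  have h₃ : -γ + 1 ≠ 0 := by linarith
  field_simp
  ring

/-- The moment `∫ w ^ q ∂(muEll γ 1)`, which is the paper's constant `D` at `q = m`. -/
def ellMoment (γ q : ℝ) : ℝ := q * (q - 1) / (γ * (γ - 1) * (q - γ + 1) * (q - γ))

lemma ellMoment_pos (hγ : 1 < γ) (hq : γ < q) : 0 < ellMoment γ q := by
  have hq1 : 0 < q - 1 := by linarith
  have hq0 : 0 < q := by linarith
  unfold ellMoment
  positivity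

lemma integrableOn_Ioc_zero_one_rpow {a : ℝ} (ha : -1 < a) :
    IntegrableOn (fun x : ℝ => x ^ a) (Ioc 0 1) :=
  (intervalIntegrable_iff_integrableOn_Ioc_of_le zero_le_one).1
    (intervalIntegral.intervalIntegrable_rpow' ha)

lemma integral_Ioc_zero_one_rpow {a : ℝ} (ha : -1 < a) :
    ∫ x in Ioc (0 : ℝ) 1, x ^ a = (a + 1)⁻¹ := by
  rw [← intervalIntegral.integral_of_le zero_le_one, integral_rpow (.inl ha), Real.one_rpow,
    Real.zero_rpow (by linarith), sub_zero, one_div]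

lemma lintegral_Ioc_rpow_mul_tail (hγ : 1 < γ) (hq : γ < q) :
    ∫⁻ x in Ioc 0 1, ENNReal.ofReal (x ^ (q - γ - 1) * ((1 - x) / γ + x / (γ * (γ - 1)))) =
      ENNReal.ofReal (ellMoment γ q / q) := by
  have hγ' : 0 < γ - 1 := by linarith
  have h_int₁ : IntegrableOn (fun x : ℝ => γ⁻¹ * x ^ (q - γ - 1)) (Ioc 0 1) :=
    (integrableOn_Ioc_zero_one_rpow (by linarith)).const_mul _
  have h_int₂ : IntegrableOn (fun x : ℝ => ((γ * (γ - 1))⁻¹ - γ⁻¹) * x ^ (q - γ)) (Ioc 0 1) :=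
    (integrableOn_Ioc_zero_one_rpow (by linarith)).const_mul _
  have hsplit {x : ℝ} (hx : x ∈ Ioc 0 1) :
      x ^ (q - γ - 1) * ((1 - x) / γ + x / (γ * (γ - 1))) =
        γ⁻¹ * x ^ (q - γ - 1) + ((γ * (γ - 1))⁻¹ - γ⁻¹) * x ^ (q - γ) := by
    have hpow : x ^ (q - γ) = x ^ (q - γ - 1) * x := by
      rw [← Real.rpow_add_one hx.1.ne', sub_add_cancel]
    rw [hpow]
    ring
  have hnonneg {x : ℝ} (hx : x ∈ Ioc 0 1) :
      0 ≤ x ^ (q - γ - 1) * ((1 - x) / γ + x / (γ * (γ - 1))) := by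
    have h₀ := hx.1
    have h₁ := sub_nonneg.2 hx.2
    positivity
  rw [← ofReal_integral_eq_lintegral_ofReal
      ((integrableOn_congr_fun (fun _ => hsplit) measurableSet_Ioc).2 (h_int₁.add h_int₂))
      (ae_restrict_of_forall_mem measurableSet_Ioc fun _ => hnonneg),
    setIntegral_congr_fun measurableSet_Ioc fun _ => hsplit, integral_add h_int₁ h_int₂,
    integral_const_mul, integral_const_mul, integral_Ioc_zero_one_rpow (by linarith),
    integral_Ioc_zero_one_rpow (by linarith), ellMoment]
  congr 1
  have h₂ : q - γ ≠ 0 := by linarith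
  have h₃ : q - γ + 1 ≠ 0 := by linarith
  have h₄ : q ≠ 0 := by linarith
  have h₅ : γ ≠ 0 := by linarith
  rw [sub_add_cancel]
  field_simp
  ring

lemma lintegral_rpow_muEll (hγ : 1 < γ) (hq : γ < q) :
    ∫⁻ w, ENNReal.ofReal (w ^ q) ∂muEll γ 1 = ENNReal.ofReal (ellMoment γ q) := by
  have hsupp := ae_muEll_mem_Ioc γ (zero_le_one' ℝ)
  have hq0 : 0 < q := by linarith
  have htail_zero {x : ℝ} (hx : 1 < x) : muEll γ 1 (Ici x) = 0 :=
    measure_mono_null (fun w hw (hw' : w ∈ Ioc 0 1) => (hx.trans_le hw).not_ge hw'.2) hsupp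
  have htail {x : ℝ} (hx : x ∈ Ioi 0) : muEll γ 1 (Ici x) * ENNReal.ofReal (x ^ (q - 1)) =
      (Ioc 0 1).indicator (fun x => ENNReal.ofReal
        (x ^ (q - γ - 1) * ((1 - x) / γ + x / (γ * (γ - 1))))) x := by
    have hx0 : 0 < x := hx
    rcases le_or_gt x 1 with hx1 | hx1
    · have hpow : x ^ (-γ) * x ^ (q - 1) = x ^ (q - γ - 1) := by
        rw [← Real.rpow_add hx]
        ring_nf
      rw [muEll_Ici hγ hx hx1, indicator_of_mem (mem_Ioc.2 ⟨hx0, hx1⟩),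
        ← ENNReal.ofReal_mul' (by positivity), mul_right_comm, hpow]
    · rw [htail_zero hx1, zero_mul, indicator_of_notMem (notMem_Ioc_of_gt hx1)]
  calc ∫⁻ w, ENNReal.ofReal (w ^ q) ∂muEll γ 1
      = ENNReal.ofReal q * ∫⁻ x in Ioi 0, muEll γ 1 (Ici x) * ENNReal.ofReal (x ^ (q - 1)) :=
        lintegral_rpow_eq_lintegral_meas_le_mul _ (hsupp.mono fun w hw => hw.1.le) aemeasurable_id
          hq0
    _ = ENNReal.ofReal q * ENNReal.ofReal (ellMoment γ q / q) := by
        rw [setLIntegral_congr_fun measurableSet_Ioi fun _ => htail,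
          setLIntegral_indicator measurableSet_Ioc, inter_eq_left.2 Ioc_subset_Ioi_self,
          lintegral_Ioc_rpow_mul_tail hγ hq]
    _ = ENNReal.ofReal (ellMoment γ q) := by
        rw [← ENNReal.ofReal_mul hq0.le, mul_div_cancel₀ _ hq0.ne']

lemma integrable_rpow_muEll (hγ : 1 < γ) (hq : γ < q) :
    Integrable (fun w => w ^ q) (muEll γ 1) := by
  have hnonneg : 0 ≤ᵐ[muEll γ 1] fun w => w ^ q :=
    (ae_muEll_mem_Ioc γ zero_le_one).mono fun w hw => Real.rpow_nonneg hw.1.le q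
  refine ⟨by fun_prop, (hasFiniteIntegral_iff_ofReal hnonneg).2 ?_⟩
  rw [lintegral_rpow_muEll hγ hq]
  exact ENNReal.ofReal_lt_top

lemma integral_rpow_muEll (hγ : 1 < γ) (hq : γ < q) :
    ∫ w, w ^ q ∂muEll γ 1 = ellMoment γ q := by
  rw [integral_eq_lintegral_of_nonneg_ae ((ae_muEll_mem_Ioc γ zero_le_one).mono fun w hw =>
    Real.rpow_nonneg hw.1.le q) (by fun_prop), lintegral_rpow_muEll hγ hq,
    ENNReal.toReal_ofReal (ellMoment_pos hγ hq).le]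

lemma muEllR_real_Ici (γ t : ℝ) (F : Measure ℝ) {y : ℝ} (hy : 0 < y) :
    (muEllR γ t F).real (Ici y) = (F ∗ₘ muEll γ t).real (Ici y) := by
  rw [muEllR_eq_restrict_mconv, measureReal_restrict_apply measurableSet_Ici,
    inter_eq_left.2 (Ici_subset_Ioi.2 hy)]

lemma ae_muEllR_pos (γ t : ℝ) (F : Measure ℝ) : ∀ᵐ v ∂muEllR γ t F, 0 < v :=
  ae_restrict_mem measurableSet_Ioi

section Tail

variable {F : Measure ℝ} {m : ℝ}

lemma tendsto_muEllR_real_Ici_div [IsFiniteMeasure F] (hγ : 1 < γ) (hm : γ < m)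
    (hF : IsRegularlyVarying (fun y => F.real (Ici y)) (-m)) :
    Tendsto (fun y => (muEllR γ 1 F).real (Ici y) / F.real (Ici y)) atTop
      (𝓝 (ellMoment γ m)) := by
  obtain ⟨q, hγq, hqm⟩ := exists_between hm
  have h := tendsto_mconv_real_Ici_div hF (ae_muEll_mem_Ioc γ zero_le_one) hqm
    (integrable_rpow_muEll hγ hγq)
  rw [integral_rpow_muEll hγ hm] at h
  refine h.congr' ?_
  filter_upwards [eventually_gt_atTop 0] with y hy
  rw [muEllR_real_Ici γ 1 F hy]

lemma isRegularlyVarying_muEllR [IsFiniteMeasure F] (hγ : 1 < γ) (hm : γ < m)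
    (hF : IsRegularlyVarying (fun y => F.real (Ici y)) (-m)) :
    IsRegularlyVarying (fun y => (muEllR γ 1 F).real (Ici y)) (-m) :=
  hF.of_tendsto_div (ellMoment_pos hγ hm).ne' (tendsto_muEllR_real_Ici_div hγ hm hF)

lemma integrable_rpow_muEllR [SFinite F] (hγ : 1 < γ) {p : ℝ} (hp : γ < p) (hFpos : ∀ᵐ r ∂F, 0 ≤ r)
    (hF : Integrable (fun r => r ^ p) F) : Integrable (fun v => v ^ p) (muEllR γ 1 F) := by
  have hr : ∀ᵐ z ∂F.prod (muEll γ 1), 0 ≤ z.1 := Measure.quasiMeasurePreserving_fst.ae hFpos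
  have hw : ∀ᵐ z ∂F.prod (muEll γ 1), z.2 ∈ Ioc 0 1 :=
    Measure.quasiMeasurePreserving_snd.ae (ae_muEll_mem_Ioc γ zero_le_one)
  have hprod : Integrable (fun z : ℝ × ℝ => (z.1 * z.2) ^ p) (F.prod (muEll γ 1)) := by
    refine (hF.mul_prod (integrable_rpow_muEll hγ hp)).congr ?_
    filter_upwards [hr, hw] with z hz₁ hz₂
    exact (Real.mul_rpow hz₁ hz₂.1.le).symm
  exact ((integrable_map_measure (by fun_prop) (by fun_prop)).2 hprod).integrableOn

lemma exists_integrable_rpow_muEllR [IsFiniteMeasure F] (hγ₁ : 1 < γ) (hγ₂ : γ < 2) (hm : γ < m)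
    (hFpos : ∀ᵐ r ∂F, 0 ≤ r) (hF : IsRegularlyVarying (fun y => F.real (Ici y)) (-m)) :
    ∃ p : ℝ, 1 < p ∧ p ≤ 2 ∧ Integrable (fun v => v ^ p) (muEllR γ 1 F) := by
  obtain ⟨p, hγp, hp⟩ := exists_between (lt_min hm hγ₂)
  obtain ⟨hpm, hp₂⟩ := lt_min_iff.1 hp
  exact ⟨p, hγ₁.trans hγp, hp₂.le, integrable_rpow_muEllR hγ₁ hγp hFpos
    (integrable_rpow_of_isRegularlyVarying hFpos hF (by linarith) hpm)⟩

end Tail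

lemma mul_rpow_one_sub_mem_Ioc {Q : ℝ} (hQ : 0 < Q) (hγ : 1 ≤ γ) (ht : 1 ≤ t) :
    Q * t ^ (1 - γ) ∈ Ioc 0 Q :=
  ⟨mul_pos hQ (Real.rpow_pos_of_pos (by linarith) _), mul_le_of_le_one_right hQ.le
    (Real.rpow_le_one_of_one_le_of_nonpos ht (by linarith))⟩

lemma map_div_real_Ici {Ω : Type*} [MeasurableSpace Ω] (P : Measure Ω) {Z : Ω → ℝ}
    (hZ : Measurable Z) (ht : 0 < t) (x : ℝ) :
    (P.map fun ω => Z ω / t).real (Ici (x / t)) = P.real {ω | x ≤ Z ω} := by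
  rw [map_measureReal_apply (hZ.div_const t) measurableSet_Ici]
  congr 1 with ω
  exact div_le_div_iff_of_pos_right ht

lemma isCenteredPoissonLaw_map_div {Ω : Type*} [MeasurableSpace Ω] {P : Measure Ω} {Z : Ω → ℝ}
    {F : Measure ℝ} [SFinite F] {Q : ℝ} (hQ : 0 ≤ Q) (ht : 0 < t) (hZ : Measurable Z)
    (hchar : ∀ θ : ℝ, ∫ ω, Complex.exp (θ * Z ω * Complex.I) ∂P =
      Complex.exp (Q * ∫ v, (Complex.exp (θ * v * Complex.I) - 1 - θ * v * Complex.I)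
        ∂muEllR γ t F)) :
    IsCenteredPoissonLaw (ENNReal.ofReal (Q * t ^ (1 - γ)) • muEllR γ 1 F)
      (P.map fun ω => Z ω / t) := by
  intro θ
  have hcast (ω : Ω) : Complex.exp (θ * (Z ω / t : ℝ) * Complex.I) =
      Complex.exp ((θ / t : ℝ) * Z ω * Complex.I) := by
    push_cast
    ring_nf
  have hkernel (v : ℝ) : levyKernel (θ / t) (t * v) = levyKernel θ v := by
    have harg : ((θ / t : ℝ) : ℂ) * (t * v : ℝ) = θ * v := by
      rw [← Complex.ofReal_mul, ← mul_assoc, div_mul_cancel₀ _ ht.ne', Complex.ofReal_mul]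
    rw [levyKernel, harg, levyKernel]
  calc charFun (P.map fun ω => Z ω / t) θ
      = ∫ ω, Complex.exp ((θ / t : ℝ) * Z ω * Complex.I) ∂P := by
        rw [charFun_apply_real, integral_map (hZ.div_const t).aemeasurable (by fun_prop)]
        simp only [hcast]
    _ = Complex.exp (Q * ∫ v, levyKernel (θ / t) v ∂muEllR γ t F) := hchar _
    _ = Complex.exp (∫ v, levyKernel θ v ∂(ENNReal.ofReal (Q * t ^ (1 - γ)) • muEllR γ 1 F)) := by
        have hmeas := (measurable_levyKernel (θ / t)).aestronglyMeasurable
          (μ := (muEllR γ 1 F).map (t * ·))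
        rw [muEllR_eq_smul_map γ ht, integral_smul_measure, integral_smul_measure,
          integral_map (by fun_prop) hmeas, ENNReal.toReal_ofReal (by positivity),
          ENNReal.toReal_ofReal (by positivity), Complex.real_smul, Complex.real_smul,
          Complex.ofReal_mul, mul_assoc]
        simp only [hkernel]

end Telecom

end

/-- Ultralarge deviations: if `ρ(t)/t → ∞` and the tail `F̄_R(y) = P(R ≥ y)` is regularly
varying of index `-m` with `m > γ`, then
`P(Y_t ≥ ρ(t)) = Q·D·t^{-(γ-1)}·F̄_R(ρ(t)/t)·(1+o(1))` as `t → ∞`, where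
`D = m(m-1)/(γ(γ-1)(m-γ+1)(m-γ))`. -/
theorem stmt_4 (γ Q : ℝ) (hγ1 : 1 < γ) (hγ2 : γ < 2) (hQ : 0 < Q)
    (FR : Measure ℝ) [IsProbabilityMeasure FR] (hFRpos : FR (Set.Iic 0) = 0)
    (hmom : Integrable (fun r => r ^ γ) FR)
    (Ω : Type*) [MeasurableSpace Ω] (P : Measure Ω) [IsProbabilityMeasure P]
    (Y : ℝ → Ω → ℝ) (hYmeas : ∀ t, Measurable (Y t))
    (hYchar : ∀ t : ℝ, 0 < t → ∀ θ : ℝ,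
      ∫ ω, Complex.exp (θ * Y t ω * Complex.I) ∂P
        = Complex.exp (Q * ∫ v, (Complex.exp (θ * v * Complex.I) - 1 - θ * v * Complex.I)
            ∂(muEllR γ t FR)))
    (m : ℝ) (hm : γ < m)
    (hreg : ∀ c : ℝ, 0 < c →
      Tendsto (fun y => (FR (Set.Ici (c * y))).toReal / (FR (Set.Ici y)).toReal)
        atTop (𝓝 (c ^ (-m))))
    (ρ : ℝ → ℝ) (hρpos : ∀ t, 0 < ρ t)
    (hρt : Tendsto (fun t => ρ t / t) atTop atTop) :
    Tendsto
      (fun t => (P {ω | ρ t ≤ Y t ω}).toReal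
        / (t ^ (-(γ - 1)) * (FR (Set.Ici (ρ t / t))).toReal))
      atTop (𝓝 (Q * (m * (m - 1) / (γ * (γ - 1) * (m - γ + 1) * (m - γ))))) := by
  have hF : IsRegularlyVarying (fun y => FR.real (Ici y)) (-m) := hreg
  have hFpos : ∀ᵐ r ∂FR, 0 ≤ r := by
    filter_upwards [measure_eq_zero_iff_ae_notMem.1 hFRpos] with r hr using (not_le.1 hr).le
  have hν := isRegularlyVarying_muEllR hγ1 hm hF
  obtain ⟨p, hp1, hp2, h_int⟩ := exists_integrable_rpow_muEllR hγ1 hγ2 hm hFpos hF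
  have hlaw : ∀ᶠ t in atTop, IsCenteredPoissonLaw
      (ENNReal.ofReal (Q * t ^ (1 - γ)) • muEllR γ 1 FR) (P.map fun ω => Y t ω / t) := by
    filter_upwards [eventually_gt_atTop 0] with t ht
    exact isCenteredPoissonLaw_map_div hQ.le ht (hYmeas t) (hYchar t ht)
  have (t : ℝ) : IsProbabilityMeasure (P.map fun ω => Y t ω / t) :=
    Measure.isProbabilityMeasure_map ((hYmeas t).div_const t).aemeasurable
  have hbigjump := tendsto_real_Ici_div_mul_tail (ae_muEllR_pos γ 1 FR) h_int hp1 hp2 hν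
    (zero_lt_one.trans (hγ1.trans hm))
    ((eventually_ge_atTop 1).mono fun t => mul_rpow_one_sub_mem_Ioc hQ hγ1.le) hρt hlaw
  have hbreiman := (tendsto_muEllR_real_Ici_div hγ1 hm hF).comp hρt
  have h := hbigjump.mul (hbreiman.const_mul Q)
  rw [one_mul] at h
  refine h.congr' ?_
  filter_upwards [eventually_gt_atTop 0, hρt.eventually hν.eventually_ne_zero] with t ht hνt
  have hpow := (Real.rpow_pos_of_pos ht (1 - γ)).ne'
  rw [map_div_real_Ici P (hYmeas t) ht, neg_sub, Function.comp_apply]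
  simp only [← measureReal_def]
  field_simp
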